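/- arXiv:2505.15290 — 10 statements merged into one kernel-verified Lean document; each statement's English description precedes it below -/
import Mathlib

section
/- Let X be a nonempty finite set, let κ, λ, μ, ν be probability distributions on X, and let ω be a coupling of λ and μ. Then there exist a coupling π of κ and μ with d_TV(ω, π) ≤ d_TV(κ, λ), and a coupling ρ of λ and ν with d_TV(ω, ρ) ≤ d_TV(μ, ν). -/
open Finset Filter
open scoped Classical

/-- `μ` is a probability distribution on the finite type `X`. -/
def IsDist {X : Type*} [Fintype X] (μ : X → ℝ) : Prop :=
  (∀ x, 0 ≤ μ x) ∧ ∑ x, μ x = 1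

/-- `ω` is a coupling of the distributions `μ` and `ν`. -/
def IsCoupling {X : Type*} [Fintype X] (ω : X × X → ℝ) (μ ν : X → ℝ) : Prop :=
  IsDist ω ∧ (∀ x, ∑ y, ω (x, y) = μ x) ∧ (∀ x, ∑ y, ω (y, x) = ν x)

/-- Total variation distance: the maximum pointwise difference. -/
noncomputable def dTV {X : Type*} [Fintype X] (μ ν : X → ℝ) : ℝ :=
  ⨆ x, |μ x - ν x|

/-- The support of a (sub)distribution: points of positive probability. -/
def psupp {X : Type*} (μ : X → ℝ) : Set X := {x | 0 < μ x}

/-- Distance between functions into distributions. -/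
noncomputable def dF {A B : Type*} [Fintype B] (f g : A → B → ℝ) : ℝ :=
  ⨆ a, dTV (f a) (g a)

theorem coupling_aux {X : Type*} [Fintype X] [Nonempty X]
    (κ l μ : X → ℝ) (hκ : IsDist κ) (hl : IsDist l)
    (ω : X × X → ℝ) (hω : IsCoupling ω l μ) :
    ∃ π : X × X → ℝ, IsCoupling π κ μ ∧ dTV ω π ≤ dTV κ l := by
  obtain ⟨⟨hω0, hω1⟩, hrow, hcol⟩ := hω
  obtain ⟨hκ0, hκ1⟩ := hκ
  obtain ⟨hl0, hl1⟩ := hl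
  have hωl : ∀ x y, ω (x, y) ≤ l x := by
    intro x y
    rw [← hrow x]
    exact Finset.single_le_sum (f := fun y => ω (x, y)) (fun i _ => hω0 (x, i)) (Finset.mem_univ y)
  obtain ⟨a, ha⟩ : ∃ a : X → ℝ, ∀ x, a x = max (l x - κ x) 0 := ⟨_, fun _ => rfl⟩
  obtain ⟨b, hb⟩ : ∃ b : X → ℝ, ∀ x, b x = max (κ x - l x) 0 := ⟨_, fun _ => rfl⟩
  have ha0 : ∀ x, 0 ≤ a x := fun x => by rw [ha]; exact le_max_right _ _
  have hb0 : ∀ x, 0 ≤ b x := fun x => by rw [hb]; exact le_max_right _ _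
  have hal : ∀ x, a x ≤ l x := fun x => by
    rw [ha]; exact max_le (by linarith [hκ0 x]) (hl0 x)
  have hab : ∀ x, l x - a x + b x = κ x := fun x => by
    rw [ha, hb]
    rcases le_total (l x) (κ x) with h | h
    · rw [max_eq_right (by linarith), max_eq_left (by linarith)]; ring
    · rw [max_eq_left (by linarith), max_eq_right (by linarith)]; ring
  have habs : ∀ x, a x ≤ |κ x - l x| ∧ b x ≤ |κ x - l x| := fun x => by
    rw [ha, hb]
    exact ⟨max_le (by rw [abs_sub_comm]; exact le_abs_self _) (abs_nonneg _),
      max_le (le_abs_self _) (abs_nonneg _)⟩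
  obtain ⟨T, hT⟩ : ∃ T, T = ∑ x, a x := ⟨_, rfl⟩
  have hTb : ∑ x, b x = T := by
    have : ∑ x, (l x - a x + b x) = ∑ x, κ x := Finset.sum_congr rfl (fun x _ => hab x)
    rw [Finset.sum_add_distrib, Finset.sum_sub_distrib] at this
    linarith
  have hT0 : 0 ≤ T := hT ▸ Finset.sum_nonneg (fun x _ => ha0 x)
  obtain ⟨c, hc⟩ : ∃ c : X → ℝ, ∀ x, c x = a x / l x := ⟨_, fun _ => rfl⟩
  have hc0 : ∀ x, 0 ≤ c x := fun x => hc x ▸ div_nonneg (ha0 x) (hl0 x)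
  have hc1 : ∀ x, c x ≤ 1 := fun x => hc x ▸ div_le_one_of_le₀ (hal x) (hl0 x)
  have hlc : ∀ x, l x * c x = a x := fun x => by
    rw [hc]
    rcases eq_or_ne (l x) 0 with h | h
    · rw [h, zero_mul]; exact le_antisymm (ha0 x) (h ▸ hal x)
    · field_simp
  obtain ⟨r, hr⟩ : ∃ r : X → ℝ, ∀ y, r y = ∑ x, ω (x, y) * c x := ⟨_, fun _ => rfl⟩
  have hr0 : ∀ y, 0 ≤ r y := fun y => hr y ▸
    Finset.sum_nonneg (fun x _ => mul_nonneg (hω0 _) (hc0 x))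
  have hωa : ∀ x y, ω (x, y) * c x ≤ a x := fun x y => by
    rw [← hlc x]; exact mul_le_mul_of_nonneg_right (hωl x y) (hc0 x)
  have hrT : ∀ y, r y ≤ T := fun y => by
    rw [hr, hT]; exact Finset.sum_le_sum (fun x _ => hωa x y)
  have hrs : ∑ y, r y = T := by
    simp_rw [hr]
    rw [Finset.sum_comm, hT]
    refine Finset.sum_congr rfl (fun x _ => ?_)
    rw [← Finset.sum_mul, hrow, hlc]
  obtain ⟨s, hs⟩ : ∃ s : X → ℝ, ∀ y, s y = r y / T := ⟨_, fun _ => rfl⟩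
  have hs0 : ∀ y, 0 ≤ s y := fun y => hs y ▸ div_nonneg (hr0 y) hT0
  have hs1 : ∀ y, s y ≤ 1 := fun y => hs y ▸ div_le_one_of_le₀ (hrT y) hT0
  have hTs : ∀ y, T * s y = r y := fun y => by
    rw [hs]
    rcases eq_or_ne T 0 with h | h
    · rw [h, zero_mul]; exact le_antisymm (hr0 y) (h ▸ hrT y)
    · field_simp
  have hbT : ∀ x, b x ≤ T := fun x => by
    rw [← hTb]; exact Finset.single_le_sum (fun i _ => hb0 i) (Finset.mem_univ x)
  have hbs : ∀ x, b x * ∑ y, s y = b x := fun x => by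
    simp_rw [hs]
    rw [← Finset.sum_div, hrs]
    rcases eq_or_ne T 0 with h | h
    · have : b x = 0 := le_antisymm (h ▸ hbT x) (hb0 x)
      rw [this, zero_mul]
    · field_simp
  have hrow' : ∀ x, ∑ y, (ω (x, y) - ω (x, y) * c x + b x * s y) = κ x := fun x => by
    rw [Finset.sum_add_distrib, Finset.sum_sub_distrib, ← Finset.sum_mul, ← Finset.mul_sum,
      hrow, hlc, hbs, hab]
  refine ⟨fun p => ω p - ω p * c p.1 + b p.1 * s p.2, ⟨⟨?_, ?_⟩, hrow', ?_⟩, ?_⟩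
  · rintro ⟨x, y⟩
    have h1 := mul_le_mul_of_nonneg_left (hc1 x) (hω0 (x, y))
    have h2 := mul_nonneg (hb0 x) (hs0 y)
    dsimp only
    linarith
  · rw [Fintype.sum_prod_type]
    dsimp only
    simp_rw [hrow', hκ1]
  · intro y
    dsimp only
    rw [Finset.sum_add_distrib, Finset.sum_sub_distrib, ← Finset.sum_mul, hcol, ← hr, hTb, hTs]
    ring
  · refine ciSup_le ?_
    rintro ⟨x, y⟩
    refine le_trans ?_ (le_ciSup (f := fun x => |κ x - l x|) (Set.finite_range _).bddAbove x)
    dsimp only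
    have h1 := mul_le_mul_of_nonneg_left (hs1 y) (hb0 x)
    have h2 := mul_nonneg (hb0 x) (hs0 y)
    have h3 := mul_nonneg (hω0 (x, y)) (hc0 x)
    have h4 := hωa x y
    obtain ⟨h5, h6⟩ := habs x
    rw [abs_le (b := |κ x - l x|)]
    constructor <;> linarith

/-- Lemma 8 (couplings): given a coupling `ω` of `l` and `μ`, there are couplings `π` of `κ,μ`
and `ρ` of `l,ν` within total variation distance `d_TV(κ,l)` resp. `d_TV(μ,ν)` of `ω`. -/
theorem coupling_perturbation {X : Type*} [Fintype X] [Nonempty X]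
    (κ l μ ν : X → ℝ) (hκ : IsDist κ) (hl : IsDist l) (hμ : IsDist μ) (hν : IsDist ν)
    (ω : X × X → ℝ) (hω : IsCoupling ω l μ) :
    (∃ π : X × X → ℝ, IsCoupling π κ μ ∧ dTV ω π ≤ dTV κ l) ∧
    (∃ ρ : X × X → ℝ, IsCoupling ρ l ν ∧ dTV ω ρ ≤ dTV μ ν) := by
  refine ⟨coupling_aux κ l μ hκ hl ω hω, ?_⟩
  obtain ⟨⟨h0, h1⟩, hr, hc⟩ := hω
  obtain ⟨π, ⟨⟨p0, p1⟩, pr, pc⟩, hd⟩ := coupling_aux ν μ l hν hμ (fun p => ω p.swap)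
    ⟨⟨fun p => h0 _, by rw [← h1]; exact Equiv.sum_comp (Equiv.prodComm X X) ω⟩, hc, hr⟩
  refine ⟨fun p => π p.swap,
    ⟨⟨fun p => p0 _, by rw [← p1]; exact Equiv.sum_comp (Equiv.prodComm X X) π⟩, pc, pr⟩, ?_⟩
  have e1 : dTV ω (fun p => π p.swap) = dTV (fun p => ω p.swap) π := by
    unfold dTV
    exact (Equiv.iSup_comp (g := fun p : X × X => |ω p - π p.swap|) (Equiv.prodComm X X)).symm
  have e2 : dTV μ ν = dTV ν μ := by
    unfold dTV
    simp_rw [abs_sub_comm]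
  rw [e1, e2]
  exact hd
end

section
/- Let X be a nonempty finite set, let κ, λ, μ, ν be probability distributions on X, and let ω be a coupling of λ and μ. Then there exists a coupling π of κ and ν such that d_TV(ω, π) ≤ d_TV(κ, λ) + d_TV(μ, ν). -/
open Finset Filter
open scoped Classical

lemma one_step {X : Type*} [Fintype X] (l μ ν : X → ℝ) (hμ : IsDist μ) (hν : IsDist ν)
    (ω : X × X → ℝ) (hω : IsCoupling ω l μ) (d : ℝ) (hd : ∀ x, |μ x - ν x| ≤ d) :
    ∃ π : X × X → ℝ, IsCoupling π l ν ∧ ∀ a, |ω a - π a| ≤ d := by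
  obtain ⟨⟨w0, w1⟩, wr, wc⟩ := hω
  obtain ⟨m0, m1⟩ := hμ
  obtain ⟨n0, n1⟩ := hν
  set p : X → ℝ := fun z => max (μ z - ν z) 0 with hp
  set q : X → ℝ := fun z => max (ν z - μ z) 0 with hq
  have p0 : ∀ z, 0 ≤ p z := fun z => le_max_right _ _
  have q0 : ∀ z, 0 ≤ q z := fun z => le_max_right _ _
  have pm : ∀ z, p z ≤ μ z := fun z => max_le (by linarith [n0 z]) (m0 z)
  have pq : ∀ z, p z - q z = μ z - ν z := by
    intro z
    simp only [hp, hq]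
    rcases le_total (μ z) (ν z) with h | h
    · rw [max_eq_right (by linarith), max_eq_left (by linarith)]; ring
    · rw [max_eq_left (by linarith), max_eq_right (by linarith)]; ring
  have pd : ∀ z, p z ≤ d := fun z =>
    max_le ((le_abs_self _).trans (hd z)) ((abs_nonneg _).trans (hd z))
  have qd : ∀ z, q z ≤ d := fun z =>
    max_le (by linarith [neg_abs_le (μ z - ν z), hd z]) ((abs_nonneg _).trans (hd z))
  have hS : ∑ z, q z = ∑ z, p z := by
    have : ∑ z, (p z - q z) = ∑ z, (μ z - ν z) := Finset.sum_congr rfl fun z _ => pq z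
    rw [Finset.sum_sub_distrib, Finset.sum_sub_distrib, m1, n1] at this
    linarith
  set S := ∑ z, p z with hSdef
  have S0 : 0 ≤ S := Finset.sum_nonneg fun z _ => p0 z
  set r : X → ℝ := fun z => p z / μ z with hr
  have r0 : ∀ z, 0 ≤ r z := fun z => div_nonneg (p0 z) (m0 z)
  have r1 : ∀ z, r z ≤ 1 := fun z => div_le_one_of_le₀ (pm z) (m0 z)
  have mr : ∀ z, μ z * r z = p z := by
    intro z
    by_cases h : μ z = 0
    · have := pm z
      have := p0 z
      rw [h, zero_mul]; linarith
    · simp only [hr]; field_simp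
  have wm : ∀ x z, ω (x, z) ≤ μ z := fun x z => by
    rw [← wc z]
    exact Finset.single_le_sum (f := fun y => ω (y, z)) (fun y _ => w0 _) (Finset.mem_univ x)
  set L : X → ℝ := fun x => ∑ z, ω (x, z) * r z with hL
  have L0 : ∀ x, 0 ≤ L x := fun x => Finset.sum_nonneg fun z _ => mul_nonneg (w0 _) (r0 z)
  have colp : ∀ z, ∑ x, ω (x, z) * r z = p z := fun z => by
    rw [← Finset.sum_mul, wc, mr]
  have LS : ∑ x, L x = S := by
    simp only [hL]
    rw [Finset.sum_comm]
    exact Finset.sum_congr rfl fun z _ => colp z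
  have LleS : ∀ x, L x ≤ S := fun x => by
    rw [← LS]
    exact Finset.single_le_sum (fun y _ => L0 y) (Finset.mem_univ x)
  have g0 : ∀ x z, 0 ≤ L x / S * q z := fun x z => mul_nonneg (div_nonneg (L0 x) S0) (q0 z)
  have gd : ∀ x z, L x / S * q z ≤ q z := fun x z =>
    mul_le_of_le_one_left (q0 z) (div_le_one_of_le₀ (LleS x) S0)
  have l0 : ∀ x z, 0 ≤ ω (x, z) * r z := fun x z => mul_nonneg (w0 _) (r0 z)
  have ld : ∀ x z, ω (x, z) * r z ≤ p z := fun x z => by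
    rw [← mr z]; exact mul_le_mul_of_nonneg_right (wm x z) (r0 z)
  have lw : ∀ x z, ω (x, z) * r z ≤ ω (x, z) := fun x z =>
    mul_le_of_le_one_right (w0 _) (r1 z)
  have row : ∀ x, ∑ z, (ω (x, z) - ω (x, z) * r z + L x / S * q z) = l x := fun x => by
    rw [Finset.sum_add_distrib, Finset.sum_sub_distrib, wr, ← Finset.mul_sum, hS]
    change l x - L x + L x / S * S = l x
    by_cases h : S = 0
    · have := L0 x
      have := LleS x
      rw [h]; linarith
    · field_simp; ring
  have col : ∀ z, ∑ x, (ω (x, z) - ω (x, z) * r z + L x / S * q z) = ν z := fun z => by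
    rw [Finset.sum_add_distrib, Finset.sum_sub_distrib, wc, colp, ← Finset.sum_mul,
      ← Finset.sum_div, LS]
    by_cases h : S = 0
    · have : q z ≤ S := by
        rw [← hS]; exact Finset.single_le_sum (fun y _ => q0 y) (Finset.mem_univ z)
      have := q0 z
      have := pq z
      rw [h]; linarith
    · rw [div_self h]; linarith [pq z]
  refine ⟨fun a => ω a - ω a * r a.2 + L a.1 / S * q a.2, ⟨⟨?_, ?_⟩, row, col⟩, ?_⟩
  · rintro ⟨x, z⟩
    linarith [lw x z, g0 x z]
  · rw [Fintype.sum_prod_type_right, ← n1]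
    exact Finset.sum_congr rfl fun z _ => col z
  · rintro ⟨x, z⟩
    rw [abs_le]
    constructor <;> dsimp only <;>
      linarith [l0 x z, ld x z, g0 x z, gd x z, pd z, qd z]

lemma coupling_swap {X : Type*} [Fintype X] {l μ : X → ℝ} {ω : X × X → ℝ}
    (h : IsCoupling ω l μ) : IsCoupling (fun a => ω a.swap) μ l := by
  obtain ⟨⟨w0, w1⟩, wr, wc⟩ := h
  refine ⟨⟨fun a => w0 _, ?_⟩, wc, wr⟩
  rw [← w1]
  exact Equiv.sum_comp (Equiv.prodComm X X) ω

lemma le_dTV {X : Type*} [Fintype X] (μ ν : X → ℝ) (x : X) : |μ x - ν x| ≤ dTV μ ν :=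
  le_ciSup (f := fun x => |μ x - ν x|) (Set.finite_range _).bddAbove x

/-- Corollary 9: given a coupling `ω` of `l` and `μ`, there is a coupling `π` of `κ` and `ν`
with `d_TV(ω,π) ≤ d_TV(κ,l) + d_TV(μ,ν)`. -/
theorem coupling_perturbation_both {X : Type*} [Fintype X] [Nonempty X]
    (κ l μ ν : X → ℝ) (hκ : IsDist κ) (hl : IsDist l) (hμ : IsDist μ) (hν : IsDist ν)
    (ω : X × X → ℝ) (hω : IsCoupling ω l μ) :
    ∃ π : X × X → ℝ, IsCoupling π κ ν ∧ dTV ω π ≤ dTV κ l + dTV μ ν := by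
  obtain ⟨π₁, h₁, b₁⟩ := one_step l μ ν hμ hν ω hω _ (le_dTV μ ν)
  obtain ⟨π₂, h₂, b₂⟩ := one_step ν l κ hl hκ _ (coupling_swap h₁) (dTV κ l)
    (fun x => by rw [abs_sub_comm]; exact le_dTV κ l x)
  refine ⟨_, coupling_swap h₂, ciSup_le fun a => ?_⟩
  have e₁ := b₁ a
  have e₂ := b₂ a.swap
  simp only [Prod.swap_swap] at e₂
  linarith [abs_sub_le (ω a) (π₁ a) (π₂ a.swap)]
end

section
/- Fix a finite state set S, a finite label set L and a labelling ℓ : S → L taking at least two distinct values. For all transition probability functions σ, τ : S → D(S) and every S²_Δ-closed policy P for σ, there exists an S²_Δ-closed policy Q for τ such that d_F(P, Q) ≤ 2 · d_F(σ, τ). -/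
open Finset Filter
open scoped Classical

/-- `τ` is a transition probability function on `S`. -/
def IsTransFn {S : Type*} [Fintype S] (τ : S → S → ℝ) : Prop := ∀ s, IsDist (τ s)

/-- The diagonal `S²_Δ`. -/
def SDelta (S : Type*) : Set (S × S) := {p | p.1 = p.2}

/-- `P` is a policy for `τ` (with labelling `ℓ`). -/
def IsPolicy {S L : Type*} [Fintype S] (ℓ : S → L) (τ : S → S → ℝ)
    (P : S × S → S × S → ℝ) : Prop :=
  (∀ p, IsDist (P p)) ∧
  (∀ p : S × S, ℓ p.1 = ℓ p.2 → IsCoupling (P p) (τ p.1) (τ p.2)) ∧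
  (∀ p : S × S, ℓ p.1 ≠ ℓ p.2 → psupp (P p) = {p})

/-- A policy is `S²_Δ`-closed if the support of `P (s,s)` lies in the diagonal. -/
def DeltaClosed {S : Type*} (P : S × S → S × S → ℝ) : Prop :=
  ∀ s : S, psupp (P (s, s)) ⊆ SDelta S

/-- `d` is a `[0,1]`-valued function. -/
def Is01 {A : Type*} (d : A → ℝ) : Prop := ∀ a, 0 ≤ d a ∧ d a ≤ 1

/-- `d` is the least fixed point of `F` on the complete lattice of `[0,1]`-valued functions. -/
def IsLfpOn {A : Type*} (F : (A → ℝ) → (A → ℝ)) (d : A → ℝ) : Prop :=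
  Is01 d ∧ F d = d ∧ ∀ e, Is01 e → F e = e → ∀ a, d a ≤ e a

/-- The map `Γ_P` whose least fixed point is `γ_P`. -/
noncomputable def GammaF {S L : Type*} [Fintype S] (ℓ : S → L)
    (P : S × S → S × S → ℝ) (d : S × S → ℝ) : S × S → ℝ :=
  fun p => if ℓ p.1 ≠ ℓ p.2 then 1 else ∑ q, P p q * d q

/-- The map `Δ_τ` whose least fixed point is the probabilistic bisimilarity distance `δ_τ`. -/
noncomputable def DeltaF {S L : Type*} [Fintype S] (ℓ : S → L)
    (τ : S → S → ℝ) (d : S × S → ℝ) : S × S → ℝ :=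
  fun p => if ℓ p.1 ≠ ℓ p.2 then 1
    else sInf {r | ∃ ω, IsCoupling ω (τ p.1) (τ p.2) ∧ r = ∑ q, ω q * d q}

/-- The map whose least fixed point is `ρ_P`, the probability of reaching `S²_Δ`. -/
noncomputable def ReachF {S : Type*} [Fintype S]
    (P : S × S → S × S → ℝ) (e : S × S → ℝ) : S × S → ℝ :=
  fun p => if p.1 = p.2 then 1 else ∑ q, P p q * e q

/-- States `s` and `t` are robustly probabilistically bisimilar. -/
def Robust {S L : Type*} [Fintype S] (ℓ : S → L) (τ : S → S → ℝ) (s t : S) : Prop :=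
  ∃ P ρ, IsPolicy ℓ τ P ∧ IsLfpOn (ReachF P) ρ ∧ ρ (s, t) = 1

/-- `R` is a probabilistic bisimulation. -/
def IsBisim {S L : Type*} [Fintype S] (ℓ : S → L) (τ : S → S → ℝ)
    (R : Set (S × S)) : Prop :=
  Equivalence (fun s t => (s, t) ∈ R) ∧
  ∀ p ∈ R, ℓ p.1 = ℓ p.2 ∧ ∃ ω, IsCoupling ω (τ p.1) (τ p.2) ∧ psupp ω ⊆ R

/-- Probabilistic bisimilarity `∼`. -/
def Bisimilar {S L : Type*} [Fintype S] (ℓ : S → L) (τ : S → S → ℝ) (s t : S) : Prop :=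
  ∃ R, IsBisim ℓ τ R ∧ (s, t) ∈ R

/-- A step of a path in `⟨S×S, P⟩` supported by `R`. -/
def SupStep {S : Type*} (P : S × S → S × S → ℝ) (R : Set (S × S)) (a b : S × S) : Prop :=
  a ∈ R ∧ psupp (P a) ⊆ R ∧ 0 < P a b

/-- `R` supports a path from `p` to `S²_Δ` in `⟨S×S, P⟩`. -/
def SupportsPathToDelta {S : Type*} (P : S × S → S × S → ℝ) (R : Set (S × S))
    (p : S × S) : Prop :=
  ∃ q : S × S, q.1 = q.2 ∧ Relation.ReflTransGen (SupStep P R) p q ∧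
    q ∈ R ∧ psupp (P q) ⊆ R

/-- `R` is a robust bisimulation. -/
def IsRobustBisim {S L : Type*} [Fintype S] (ℓ : S → L) (τ : S → S → ℝ)
    (R : Set (S × S)) : Prop :=
  IsBisim ℓ τ R ∧ ∀ p ∈ R, ∃ P, IsPolicy ℓ τ P ∧ SupportsPathToDelta P R p

/-- The function `Filter` from the algorithm. -/
def FilterFn {S L : Type*} [Fintype S] (ℓ : S → L) (τ : S → S → ℝ)
    (R : Set (S × S)) : Set (S × S) :=
  {p ∈ R | ∃ P, IsPolicy ℓ τ P ∧ SupportsPathToDelta P R p}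

/-- The function `Prune` from the algorithm. -/
def PruneFn {S : Type*} (Q : Set (S × S)) : Set (S × S) :=
  {p ∈ Q | ∀ u : S, ((p.2, u) ∈ Q → (p.1, u) ∈ Q) ∧ ((u, p.1) ∈ Q → (u, p.2) ∈ Q)}

/-- `B` is the greatest probabilistic bisimulation contained in `Q` (i.e. `B = Bisim(Q)`). -/
def IsGreatestBisimIn {S L : Type*} [Fintype S] (ℓ : S → L) (τ : S → S → ℝ)
    (Q B : Set (S × S)) : Prop :=
  IsBisim ℓ τ B ∧ B ⊆ Q ∧ ∀ B', IsBisim ℓ τ B' → B' ⊆ Q → B' ⊆ B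

/-- Reachability in the Markov chain `⟨S×S, P⟩`. -/
def Reach {S : Type*} (P : S × S → S × S → ℝ) (p q : S × S) : Prop :=
  Relation.ReflTransGen (fun a b => 0 < P a b) p q

/-- `C` is a communication class of `⟨S×S, P⟩`. -/
def IsCommClass {S : Type*} (P : S × S → S × S → ℝ) (C : Set (S × S)) : Prop :=
  ∃ p, C = {q | Reach P p q ∧ Reach P q p}

/-- `C` is closed: no transition of positive probability leaves `C`. -/
def IsClosedClass {S : Type*} (P : S × S → S × S → ℝ) (C : Set (S × S)) : Prop :=
  ∀ p ∈ C, psupp (P p) ⊆ C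

theorem coupling_step {X : Type*} [Fintype X] (ω : X × X → ℝ) (μ ν μ' : X → ℝ) (ε : ℝ)
    (hω : IsCoupling ω μ ν) (hμ : IsDist μ) (hμ' : IsDist μ')
    (hε : ∀ x, |μ x - μ' x| ≤ ε) :
    ∃ ω', IsCoupling ω' μ' ν ∧ ∀ p, |ω p - ω' p| ≤ ε := by
  obtain ⟨⟨hω0, hω1⟩, hrow, hcol⟩ := hω
  obtain ⟨hμ0, hμ1⟩ := hμ
  obtain ⟨hμ0', hμ1'⟩ := hμ'
  have key : ∃ a b : X → ℝ, (∀ x, 0 ≤ a x ∧ 0 ≤ b x ∧ a x ≤ μ x ∧ a x ≤ ε ∧ b x ≤ ε ∧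
      μ' x = μ x - a x + b x) := by
    refine ⟨fun x => max (μ x - μ' x) 0, fun x => max (μ' x - μ x) 0, fun x => ?_⟩
    have h1 := abs_le.1 (hε x)
    have h2 := hμ0 x
    have h3 := hμ0' x
    have h4 : 0 ≤ ε := (abs_nonneg _).trans (hε x)
    refine ⟨le_max_right _ _, le_max_right _ _, max_le (by linarith) h2,
      max_le (by linarith) h4, max_le (by linarith) h4, ?_⟩
    rcases le_total (μ x) (μ' x) with h | h
    · have e1 : max (μ x - μ' x) 0 = 0 := max_eq_right (by linarith)
      have e2 : max (μ' x - μ x) 0 = μ' x - μ x := max_eq_left (by linarith)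
      dsimp only; rw [e1, e2]; ring
    · have e1 : max (μ x - μ' x) 0 = μ x - μ' x := max_eq_left (by linarith)
      have e2 : max (μ' x - μ x) 0 = 0 := max_eq_right (by linarith)
      dsimp only; rw [e1, e2]; ring
  obtain ⟨a, b, hab⟩ := key
  have hsum : ∑ x, b x = ∑ x, a x := by
    have : ∑ x, μ' x = ∑ x, μ x - ∑ x, a x + ∑ x, b x := by
      rw [← Finset.sum_sub_distrib, ← Finset.sum_add_distrib]
      exact Finset.sum_congr rfl fun x _ => (hab x).2.2.2.2.2
    linarith
  have ha0 : ∀ x, 0 ≤ a x := fun x => (hab x).1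
  have hb0 : ∀ x, 0 ≤ b x := fun x => (hab x).2.1
  have hm0 : 0 ≤ ∑ x, a x := Finset.sum_nonneg fun x _ => ha0 x
  rcases hm0.eq_or_lt with hm | hm
  · have hA : ∀ x, a x = 0 := fun x =>
      (Finset.sum_eq_zero_iff_of_nonneg fun x _ => ha0 x).1 hm.symm x (Finset.mem_univ x)
    have hB : ∀ x, b x = 0 := fun x =>
      (Finset.sum_eq_zero_iff_of_nonneg fun x _ => hb0 x).1 (hsum.trans hm.symm) x
        (Finset.mem_univ x)
    refine ⟨ω, ⟨⟨hω0, hω1⟩, fun x => ?_, hcol⟩, fun p => ?_⟩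
    · rw [hrow, (hab x).2.2.2.2.2, hA, hB]; ring
    · rw [sub_self, abs_zero]; exact (abs_nonneg _).trans (hε p.1)
  set m := ∑ x, a x with hmdef
  let t : X → ℝ := fun x => a x / μ x
  have ht0 : ∀ x, 0 ≤ t x := fun x => div_nonneg (ha0 x) (hμ0 x)
  have ht1 : ∀ x, t x ≤ 1 := fun x => div_le_one_of_le₀ (hab x).2.2.1 (hμ0 x)
  have htm : ∀ x, t x * μ x = a x := fun x => by
    rcases (hμ0 x).eq_or_lt with h | h
    · have h1 := (hab x).2.2.1
      have h2 := ha0 x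
      rw [← h]; linarith
    · exact div_mul_cancel₀ _ h.ne'
  let q : X → ℝ := fun y => (∑ x, t x * ω (x, y)) / m
  have hq0 : ∀ y, 0 ≤ q y := fun y =>
    div_nonneg (Finset.sum_nonneg fun x _ => mul_nonneg (ht0 x) (hω0 _)) hm0
  have hqm : ∀ y, m * q y = ∑ x, t x * ω (x, y) := fun y => mul_div_cancel₀ _ hm.ne'
  have hq1 : ∑ y, q y = 1 := by
    have : ∑ y, q y = (∑ y, ∑ x, t x * ω (x, y)) / m := by
      rw [Finset.sum_div]
    rw [this, Finset.sum_comm]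
    simp_rw [← Finset.mul_sum, hrow, htm]
    exact div_self hm.ne'
  have hqle : ∀ y, q y ≤ 1 := fun y =>
    hq1 ▸ Finset.single_le_sum (f := q) (fun y _ => hq0 y) (Finset.mem_univ y)
  have hr : ∀ x y, t x * ω (x, y) ≤ a x := fun x y => by
    rw [← htm x, ← hrow x]
    exact mul_le_mul_of_nonneg_left (Finset.single_le_sum (f := fun y => ω (x, y))
      (fun y _ => hω0 _) (Finset.mem_univ y)) (ht0 x)
  have hR : ∀ x, ∑ y, (ω (x, y) - t x * ω (x, y) + b x * q y) = μ' x := fun x => by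
    rw [Finset.sum_add_distrib, Finset.sum_sub_distrib, ← Finset.mul_sum, ← Finset.mul_sum,
      hrow, htm, hq1, (hab x).2.2.2.2.2, mul_one]
  have hC : ∀ y, ∑ x, (ω (x, y) - t x * ω (x, y) + b x * q y) = ν y := fun y => by
    rw [Finset.sum_add_distrib, Finset.sum_sub_distrib, ← Finset.sum_mul, hsum, hqm, hcol]
    ring
  refine ⟨fun p => ω p - t p.1 * ω p + b p.1 * q p.2, ⟨⟨fun p => ?_, ?_⟩, hR, hC⟩, ?_⟩
  · have h1 := mul_nonneg (hb0 p.1) (hq0 p.2)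
    have h2 := mul_le_mul_of_nonneg_right (ht1 p.1) (hω0 p)
    linarith
  · rw [Fintype.sum_prod_type]
    exact (Finset.sum_congr rfl fun x _ => hR x).trans hμ1'
  · rintro ⟨x, y⟩
    have h1 := mul_nonneg (hb0 x) (hq0 y)
    have h2 := mul_le_mul_of_nonneg_left (hqle y) (hb0 x)
    have h3 := hr x y
    have h4 := mul_nonneg (ht0 x) (hω0 (x, y))
    obtain ⟨_, _, _, h5, h6, _⟩ := hab x
    dsimp only
    rw [abs_le]; constructor <;> linarith

theorem IsCoupling.swap {X : Type*} [Fintype X] {ω : X × X → ℝ} {μ ν : X → ℝ}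
    (h : IsCoupling ω μ ν) : IsCoupling (fun p => ω p.swap) ν μ := by
  obtain ⟨⟨h0, h1⟩, hr, hc⟩ := h
  refine ⟨⟨fun p => h0 _, ?_⟩, hc, hr⟩
  rw [← h1]
  exact Equiv.sum_comp (Equiv.prodComm X X) ω

theorem coupling_two {X : Type*} [Fintype X] (ω : X × X → ℝ) (μ ν μ' ν' : X → ℝ) (ε : ℝ)
    (hω : IsCoupling ω μ ν) (hμ : IsDist μ) (hμ' : IsDist μ') (hν : IsDist ν) (hν' : IsDist ν')
    (hε : ∀ x, |μ x - μ' x| ≤ ε) (hε' : ∀ x, |ν x - ν' x| ≤ ε) :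
    ∃ ω', IsCoupling ω' μ' ν' ∧ ∀ p, |ω p - ω' p| ≤ 2 * ε := by
  obtain ⟨ω₁, h1, h1'⟩ := coupling_step ω μ ν μ' ε hω hμ hμ' hε
  obtain ⟨ω₂, h2, h2'⟩ := coupling_step _ ν μ' ν' ε h1.swap hν hν' hε'
  refine ⟨_, h2.swap, fun p => ?_⟩
  have h3 := abs_le.1 (h1' p)
  have h4 := abs_le.1 (h2' p.swap)
  simp only [Prod.swap_swap] at h4
  rw [abs_le]; constructor <;> linarith

/-- Proposition 12: for every `S²_Δ`-closed policy `P` for `σ` there is an `S²_Δ`-closed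
policy `Q` for `τ` with `d_F(P,Q) ≤ 2 · d_F(σ,τ)`. -/
theorem policy_Lipschitz {S L : Type*} [Fintype S] [Nonempty S] [Fintype L]
    (ℓ : S → L) (hℓ : ∃ a b : S, ℓ a ≠ ℓ b)
    (σ τ : S → S → ℝ) (hσ : IsTransFn σ) (hτ : IsTransFn τ)
    (P : S × S → S × S → ℝ) (hP : IsPolicy ℓ σ P) (hPc : DeltaClosed P) :
    ∃ Q : S × S → S × S → ℝ,
      IsPolicy ℓ τ Q ∧ DeltaClosed Q ∧ dF P Q ≤ 2 * dF σ τ := by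
  obtain ⟨hPd, hPk, hPs⟩ := hP
  have hε : ∀ s x, |σ s x - τ s x| ≤ dF σ τ := fun s x =>
    (le_ciSup (f := fun x => |σ s x - τ s x|) (Set.finite_range _).bddAbove x).trans
      (le_ciSup (f := fun s => dTV (σ s) (τ s)) (Set.finite_range _).bddAbove s)
  have hε0 : 0 ≤ dF σ τ :=
    (abs_nonneg _).trans (hε (Classical.arbitrary S) (Classical.arbitrary S))
  have key : ∀ p : S × S, ∃ ω : S × S → ℝ, IsDist ω ∧
      (ℓ p.1 = ℓ p.2 → IsCoupling ω (τ p.1) (τ p.2)) ∧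
      (ℓ p.1 ≠ ℓ p.2 → psupp ω = {p}) ∧
      (p.1 = p.2 → psupp ω ⊆ SDelta S) ∧ ∀ r, |P p r - ω r| ≤ 2 * dF σ τ := by
    rintro ⟨s, t⟩
    by_cases hl : ℓ s = ℓ t
    · by_cases hst : s = t
      · subst hst
        have hz : ∀ x y, x ≠ y → P (s, s) (x, y) = 0 := fun x y hxy =>
          le_antisymm (not_lt.1 fun h => hxy (hPc s h)) ((hPd _).1 _)
        have hd : ∀ x, P (s, s) (x, x) = σ s x := fun x => by
          rw [← (hPk (s, s) rfl).2.1 x]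
          exact (Finset.sum_eq_single x (fun y _ h => hz x y h.symm) (by simp)).symm
        have hr : ∀ x, ∑ y, (if x = y then τ s x else 0) = τ s x := fun x => by simp
        have hD : IsDist (fun p : S × S => if p.1 = p.2 then τ s p.1 else 0) := by
          refine ⟨fun p => ?_, ?_⟩
          · dsimp only
            split_ifs
            · exact (hτ s).1 _
            · exact le_rfl
          · rw [Fintype.sum_prod_type]
            exact (Finset.sum_congr rfl fun x _ => hr x).trans (hτ s).2
        refine ⟨_, hD, fun _ => ⟨hD, hr, fun x => by simp⟩, fun h => absurd rfl h,
          fun _ p hp => ?_, ?_⟩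
        · by_contra hne
          have h' : ¬ p.1 = p.2 := hne
          simp [psupp, h'] at hp
        · rintro ⟨x, y⟩
          dsimp only
          split_ifs with h
          · subst h
            rw [hd]
            have := hε s x
            linarith
          · rw [hz x y h]; simpa using hε0
      · obtain ⟨ω, h1, h2⟩ := coupling_two (P (s, t)) (σ s) (σ t) (τ s) (τ t) (dF σ τ)
          (hPk (s, t) hl) (hσ s) (hτ s) (hσ t) (hτ t) (hε s) (hε t)
        exact ⟨ω, h1.1, fun _ => h1, fun h => absurd hl h, fun h => absurd h hst, h2⟩
    · refine ⟨P (s, t), hPd _, fun h => absurd h hl, fun h => hPs _ h,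
        fun h => absurd (congrArg ℓ h) hl, fun r => ?_⟩
      rw [sub_self, abs_zero]; linarith
  choose Q h1 h2 h3 h4 h5 using key
  exact ⟨Q, ⟨h1, h2, h3⟩, fun s => h4 (s, s) rfl, ciSup_le fun p => ciSup_le fun r => h5 p r⟩
end

section
/- Let A be an n × n real matrix (n ≥ 1) with nonnegative entries that is irreducible, in the sense that for all indices i, j there exists m ≥ 1 with (A^m)_{ij} > 0, and strictly substochastic, in the sense that every row sum of A is at most 1 and at least one row sum is strictly less than 1. Then the matrix I − A is invertible. -/
open Finset Filter
open scoped Classical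

/-- Proposition 16: if `A` is a nonnegative, irreducible and strictly substochastic matrix,
then `I - A` is invertible. -/
theorem sub_one_invertible_of_irreducible_substochastic {n : ℕ} (hn : 1 ≤ n)
    (A : Matrix (Fin n) (Fin n) ℝ)
    (hnonneg : ∀ i j, 0 ≤ A i j)
    (hirr : ∀ i j, ∃ m : ℕ, 1 ≤ m ∧ 0 < (A ^ m) i j)
    (hsub : ∀ i, ∑ j, A i j ≤ 1)
    (hstrict : ∃ i, ∑ j, A i j < 1) :
    IsUnit (1 - A) := by
  rw [Matrix.isUnit_iff_isUnit_det, isUnit_iff_ne_zero]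
  intro hdet
  obtain ⟨v, hv0, hv⟩ := Matrix.exists_mulVec_eq_zero_iff.mpr hdet
  have hAv : ∀ i, v i = ∑ j, A i j * v j := by
    intro i
    have h := congrFun hv i
    rw [Matrix.sub_mulVec, Matrix.one_mulVec] at h
    simp only [Pi.sub_apply, Pi.zero_apply, Matrix.mulVec, dotProduct] at h
    linarith
  haveI : Nonempty (Fin n) := ⟨⟨0, hn⟩⟩
  obtain ⟨i0, hi0⟩ := Finite.exists_max (fun i => |v i|)
  have hM : 0 < |v i0| := by
    obtain ⟨k, hk⟩ := Function.ne_iff.mp hv0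
    exact lt_of_lt_of_le (abs_pos.mpr hk) (hi0 k)
  have hle : ∀ i, |v i| ≤ ∑ j, A i j * |v j| := by
    intro i
    calc |v i| = |∑ j, A i j * v j| := by rw [← hAv i]
      _ ≤ ∑ j, |A i j * v j| := Finset.abs_sum_le_sum_abs _ _
      _ = ∑ j, A i j * |v j| := by simp only [abs_mul, abs_of_nonneg (hnonneg _ _)]
  have hsum : ∀ i, ∑ j, A i j * |v j| ≤ (∑ j, A i j) * |v i0| := by
    intro i
    rw [Finset.sum_mul]
    exact Finset.sum_le_sum fun j _ => mul_le_mul_of_nonneg_left (hi0 j) (hnonneg i j)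
  have hstep : ∀ i j, |v i| = |v i0| → 0 < A i j → |v j| = |v i0| := by
    intro i j hi hij
    by_contra hne
    have hlt : |v j| < |v i0| := lt_of_le_of_ne (hi0 j) hne
    have h1 : ∑ j, A i j * |v j| < ∑ j, A i j * |v i0| :=
      Finset.sum_lt_sum (fun j _ => mul_le_mul_of_nonneg_left (hi0 j) (hnonneg i j))
        ⟨j, Finset.mem_univ _, mul_lt_mul_of_pos_left hlt hij⟩
    rw [← Finset.sum_mul] at h1
    nlinarith [hle i, hsub i]
  have hpow0 : ∀ m : ℕ, ∀ i j, 0 < (A ^ m) i j → |v i| = |v i0| → |v j| = |v i0| := by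
    intro m
    induction m with
    | zero =>
      intro i j h hi
      by_cases hij : i = j
      · rw [← hij, hi]
      · simp [Matrix.one_apply, hij] at h
    | succ m ih =>
      intro i j h hi
      rw [pow_succ', Matrix.mul_apply] at h
      obtain ⟨k, _, hk⟩ := Finset.exists_lt_of_sum_lt
        (s := Finset.univ) (f := fun _ => (0 : ℝ)) (by simpa using h)
      have hA : 0 < A i k := lt_of_le_of_ne (hnonneg i k) (fun h0 => by simp [← h0] at hk)
      exact ih k j (pos_of_mul_pos_right hk hA.le) (hstep i k hi hA)
  obtain ⟨s, hs⟩ := hstrict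
  obtain ⟨m, _, hm⟩ := hirr i0 s
  have hvs := hpow0 m i0 s hm rfl
  nlinarith [hle s, hsum s]
end

section
/- Fix a labelled Markov chain ⟨S, L, τ, ℓ⟩. For every policy P ∈ P_τ, the following are equivalent: (1) γ_P = δ_τ (i.e., γ_P(s,t) = δ_τ(s,t) for all s, t ∈ S); (2) Γ_P(δ_τ) = δ_τ; (3) Γ_P(δ_τ) ≤ δ_τ pointwise. -/
open Finset Filter
open scoped Classical

theorem lfp_le_of_pre {A : Type*} (F : (A → ℝ) → (A → ℝ)) (d c : A → ℝ)
    (h01 : ∀ e, Is01 e → Is01 (F e))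
    (hmono : ∀ e f, Is01 e → Is01 f → (∀ a, e a ≤ f a) → ∀ a, F e a ≤ F f a)
    (hd : IsLfpOn F d) (hc : Is01 c) (hcF : ∀ a, F c a ≤ c a) : ∀ a, d a ≤ c a := by
  set g : A → ℝ := fun a => sInf {r | ∃ e, (Is01 e ∧ ∀ b, F e b ≤ e b) ∧ r = e a} with hg
  have hbdd : ∀ a, BddBelow {r | ∃ e, (Is01 e ∧ ∀ b, F e b ≤ e b) ∧ r = e a} := by
    intro a
    refine ⟨0, ?_⟩
    rintro r ⟨e, he, rfl⟩
    exact (he.1 a).1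
  have hle : ∀ e, Is01 e → (∀ b, F e b ≤ e b) → ∀ a, g a ≤ e a := fun e h1 h2 a =>
    csInf_le (hbdd a) ⟨e, ⟨h1, h2⟩, rfl⟩
  have hge : ∀ a x, (∀ e, Is01 e → (∀ b, F e b ≤ e b) → x ≤ e a) → x ≤ g a := by
    intro a x h
    refine le_csInf ⟨c a, c, ⟨hc, hcF⟩, rfl⟩ ?_
    rintro r ⟨e, he, rfl⟩
    exact h e he.1 he.2
  have hg01 : Is01 g := fun a =>
    ⟨hge a 0 (fun e h1 _ => (h1 a).1), (hle c hc hcF a).trans (hc a).2⟩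
  have hFg : ∀ a, F g a ≤ g a := fun a => hge a _ (fun e h1 h2 =>
    (hmono g e hg01 h1 (hle e h1 h2) a).trans (h2 a))
  have hgF : ∀ a, g a ≤ F g a :=
    hle (F g) (h01 g hg01) (hmono _ _ (h01 g hg01) hg01 hFg)
  have hfix : F g = g := funext fun a => le_antisymm (hFg a) (hgF a)
  exact fun a => (hd.2.2 g hg01 hfix a).trans (hle c hc hcF a)

theorem DeltaF_le_GammaF {S L : Type*} [Fintype S] (ℓ : S → L) (τ : S → S → ℝ)
    (P : S × S → S × S → ℝ) (hP : IsPolicy ℓ τ P) (d : S × S → ℝ) (hd : Is01 d) (p : S × S) :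
    DeltaF ℓ τ d p ≤ GammaF ℓ P d p := by
  unfold DeltaF GammaF
  split_ifs with h
  · exact le_rfl
  · push Not at h
    refine csInf_le ⟨0, ?_⟩ ⟨P p, hP.2.1 p h, rfl⟩
    rintro r ⟨ω, hω, rfl⟩
    exact Finset.sum_nonneg fun q _ => mul_nonneg (hω.1.1 q) (hd q).1

theorem DeltaF_mono {S L : Type*} [Fintype S] (ℓ : S → L) (τ : S → S → ℝ)
    (P : S × S → S × S → ℝ) (hP : IsPolicy ℓ τ P) (d e : S × S → ℝ) (hd : Is01 d)
    (hde : ∀ p, d p ≤ e p) (p : S × S) :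
    DeltaF ℓ τ d p ≤ DeltaF ℓ τ e p := by
  unfold DeltaF
  split_ifs with h
  · exact le_rfl
  · push Not at h
    refine le_csInf ⟨_, P p, hP.2.1 p h, rfl⟩ ?_
    rintro r ⟨ω, hω, rfl⟩
    refine le_trans (b := ∑ q, ω q * d q) (csInf_le ⟨0, ?_⟩ ⟨ω, hω, rfl⟩)
      (Finset.sum_le_sum fun q _ => mul_le_mul_of_nonneg_left (hde q) (hω.1.1 q))
    rintro r ⟨ω, hω, rfl⟩
    exact Finset.sum_nonneg fun q _ => mul_nonneg (hω.1.1 q) (hd q).1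

theorem DeltaF_01 {S L : Type*} [Fintype S] (ℓ : S → L) (τ : S → S → ℝ)
    (P : S × S → S × S → ℝ) (hP : IsPolicy ℓ τ P) (d : S × S → ℝ) (hd : Is01 d) :
    Is01 (DeltaF ℓ τ d) := by
  intro p
  constructor
  · unfold DeltaF
    split_ifs with h
    · exact zero_le_one
    · refine Real.sInf_nonneg ?_
      rintro r ⟨ω, hω, rfl⟩
      exact Finset.sum_nonneg fun q _ => mul_nonneg (hω.1.1 q) (hd q).1
  · refine (DeltaF_le_GammaF ℓ τ P hP d hd p).trans ?_
    unfold GammaF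
    split_ifs with h
    · exact le_rfl
    · rw [← (hP.1 p).2]
      exact Finset.sum_le_sum fun q _ => mul_le_of_le_one_right ((hP.1 p).1 q) (hd q).2

/-- Proposition 20: a policy `P` is optimal (`γ_P = δ_τ`) iff `Γ_P(δ_τ) = δ_τ` iff
`Γ_P(δ_τ) ⊑ δ_τ`. -/
theorem optimal_policy_characterization {S L : Type*} [Fintype S] [Nonempty S] [Fintype L]
    (ℓ : S → L) (hℓ : ∃ a b : S, ℓ a ≠ ℓ b)
    (τ : S → S → ℝ) (hτ : IsTransFn τ)
    (P : S × S → S × S → ℝ) (hP : IsPolicy ℓ τ P)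
    (δ γ : S × S → ℝ)
    (hδ : IsLfpOn (DeltaF ℓ τ) δ) (hγ : IsLfpOn (GammaF ℓ P) γ) :
    (γ = δ ↔ GammaF ℓ P δ = δ) ∧
    (GammaF ℓ P δ = δ ↔ ∀ p, GammaF ℓ P δ p ≤ δ p) := by
  refine ⟨⟨?_, ?_⟩, ⟨fun h p => (congrFun h p).le, fun h => ?_⟩⟩
  · rintro rfl
    exact hγ.2.1
  · intro h
    funext p
    refine le_antisymm (hγ.2.2 δ hδ.1 h p) ?_
    refine lfp_le_of_pre (DeltaF ℓ τ) δ γ (DeltaF_01 ℓ τ P hP)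
      (fun e f he _ hef => DeltaF_mono ℓ τ P hP e f he hef) hδ hγ.1 (fun a => ?_) p
    exact (DeltaF_le_GammaF ℓ τ P hP γ hγ.1 a).trans (congrFun hγ.2.1 a).le
  · funext p
    refine le_antisymm (h p) ?_
    exact (congrFun hδ.2.1 p).ge.trans (DeltaF_le_GammaF ℓ τ P hP δ hδ.1 p)
end

section
/- Fix a labelled Markov chain ⟨S, L, τ, ℓ⟩. Let P ∈ P_τ be an S²_Δ-closed policy and let C be a closed communication class of the induced Markov chain ⟨S×S, P⟩. Then C = {(s,t)} for some (s,t) ∈ S²_1, or C ⊆ S²_Δ, or C ⊆ S²_{0,τ}, where S²_{0,τ} = {(s,t) ∈ S×S | s ≠ t and s ∼ t}. -/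
open Finset Filter
open scoped Classical

theorem isCoupling_mk' {X : Type*} [Fintype X] {ω : X × X → ℝ} {μ ν : X → ℝ}
    (hμ : IsDist μ) (h0 : ∀ q, 0 ≤ ω q) (h1 : ∀ x, ∑ y, ω (x, y) = μ x)
    (h2 : ∀ x, ∑ y, ω (y, x) = ν x) : IsCoupling ω μ ν := by
  refine ⟨⟨h0, ?_⟩, h1, h2⟩
  rw [Fintype.sum_prod_type]
  simp only [h1]
  exact hμ.2

theorem coupling_refl {X : Type*} [Fintype X] {μ : X → ℝ} (hμ : IsDist μ) :
    ∃ ω, IsCoupling ω μ μ ∧ ∀ x y, 0 < ω (x, y) → x = y := by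
  refine ⟨fun q => if q.1 = q.2 then μ q.1 else 0, isCoupling_mk' hμ ?_ ?_ ?_, ?_⟩
  · intro q
    split_ifs
    · exact hμ.1 _
    · exact le_rfl
  · intro x; simp
  · intro x; simp
  · intro x y h
    by_contra hne
    simp [hne] at h

theorem coupling_symm {X : Type*} [Fintype X] {ω : X × X → ℝ} {μ ν : X → ℝ}
    (hν : IsDist ν) (h : IsCoupling ω μ ν) : IsCoupling (fun q => ω (q.2, q.1)) ν μ :=
  isCoupling_mk' hν (fun _ => h.1.1 _) h.2.2 h.2.1

theorem coupling_trans {X : Type*} [Fintype X] {ω₁ ω₂ : X × X → ℝ} {μ ν ρ : X → ℝ}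
    (hμ : IsDist μ) (hν : IsDist ν) (h₁ : IsCoupling ω₁ μ ν) (h₂ : IsCoupling ω₂ ν ρ) :
    ∃ ω, IsCoupling ω μ ρ ∧ ∀ x z, 0 < ω (x, z) → ∃ y, 0 < ω₁ (x, y) ∧ 0 < ω₂ (y, z) := by
  have z1 : ∀ x y, ν y = 0 → ω₁ (x, y) = 0 := by
    intro x y hy
    have := h₁.2.2 y
    rw [hy, Finset.sum_eq_zero_iff_of_nonneg (fun _ _ => h₁.1.1 _)] at this
    exact this x (Finset.mem_univ _)
  have z2 : ∀ y z, ν y = 0 → ω₂ (y, z) = 0 := by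
    intro y z hy
    have := h₂.2.1 y
    rw [hy, Finset.sum_eq_zero_iff_of_nonneg (fun _ _ => h₂.1.1 _)] at this
    exact this z (Finset.mem_univ _)
  refine ⟨fun q => ∑ y, ω₁ (q.1, y) * ω₂ (y, q.2) / ν y, isCoupling_mk' hμ ?_ ?_ ?_, ?_⟩
  · intro q
    exact Finset.sum_nonneg fun y _ => div_nonneg (mul_nonneg (h₁.1.1 _) (h₂.1.1 _)) (hν.1 y)
  · intro x
    rw [Finset.sum_comm, ← h₁.2.1 x]
    refine Finset.sum_congr rfl fun y _ => ?_
    dsimp only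
    rw [← Finset.sum_div, ← Finset.mul_sum, h₂.2.1 y]
    by_cases hy : ν y = 0
    · simp [hy, z1 x y hy]
    · field_simp
  · intro z
    rw [Finset.sum_comm, ← h₂.2.2 z]
    refine Finset.sum_congr rfl fun y _ => ?_
    dsimp only
    rw [← Finset.sum_div, ← Finset.sum_mul, h₁.2.2 y]
    by_cases hy : ν y = 0
    · simp [hy, z2 y z hy]
    · field_simp
  · intro x z h
    by_contra hne
    push Not at hne
    refine absurd h (not_lt.mpr (le_of_eq (Finset.sum_eq_zero fun y _ => ?_)))
    dsimp only
    rcases (h₁.1.1 (x, y)).eq_or_lt with h0 | h0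
    · simp [← h0]
    · have := le_antisymm (hne y h0) (h₂.1.1 _)
      simp [this]

theorem bisimilar_of_closed {S L : Type*} [Fintype S] (ℓ : S → L)
    (τ : S → S → ℝ) (hτ : IsTransFn τ) (C : Set (S × S))
    (hC : ∀ p ∈ C, ℓ p.1 = ℓ p.2 ∧ ∃ ω, IsCoupling ω (τ p.1) (τ p.2) ∧ psupp ω ⊆ C) :
    ∀ p ∈ C, Bisimilar ℓ τ p.1 p.2 := by
  let r : S → S → Prop := fun s t => (s, t) ∈ C
  have key : ∀ s t, Relation.EqvGen r s t → ℓ s = ℓ t ∧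
      ∃ ω, IsCoupling ω (τ s) (τ t) ∧ ∀ x y, 0 < ω (x, y) → Relation.EqvGen r x y := by
    intro s t h
    induction h with
    | rel x y h =>
      obtain ⟨hl, ω, hω, hs⟩ := hC _ h
      exact ⟨hl, ω, hω, fun a b hab => .rel _ _ (hs hab)⟩
    | refl x =>
      obtain ⟨ω, hω, hs⟩ := coupling_refl (hτ x)
      exact ⟨rfl, ω, hω, fun a b hab => hs a b hab ▸ .refl _⟩
    | symm x y _ ih =>
      obtain ⟨hl, ω, hω, hs⟩ := ih
      exact ⟨hl.symm, _, coupling_symm (hτ y) hω, fun a b hab => .symm _ _ (hs b a hab)⟩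
    | trans x y z _ _ ih1 ih2 =>
      obtain ⟨hl1, ω1, hω1, hs1⟩ := ih1
      obtain ⟨hl2, ω2, hω2, hs2⟩ := ih2
      obtain ⟨ω, hω, hs⟩ := coupling_trans (hτ x) (hτ y) hω1 hω2
      refine ⟨hl1.trans hl2, ω, hω, fun a b hab => ?_⟩
      obtain ⟨c, h1, h2⟩ := hs a b hab
      exact .trans _ _ _ (hs1 _ _ h1) (hs2 _ _ h2)
  intro p hp
  refine ⟨{q | Relation.EqvGen r q.1 q.2}, ⟨Relation.EqvGen.is_equivalence r, ?_⟩, .rel _ _ hp⟩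
  intro q hq
  obtain ⟨hl, ω, hω, hs⟩ := key _ _ hq
  exact ⟨hl, ω, hω, fun a ha => hs a.1 a.2 ha⟩

/-- Proposition 21: every closed communication class of the Markov chain induced by an
`S²_Δ`-closed policy is a singleton in `S²_1`, or included in `S²_Δ`, or included in
`S²_{0,τ}` (distinct bisimilar pairs). -/
theorem closed_communication_class_cases {S L : Type*} [Fintype S] [Nonempty S] [Fintype L]
    (ℓ : S → L) (hℓ : ∃ a b : S, ℓ a ≠ ℓ b)
    (τ : S → S → ℝ) (hτ : IsTransFn τ)
    (P : S × S → S × S → ℝ) (hP : IsPolicy ℓ τ P) (hPc : DeltaClosed P)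
    (C : Set (S × S)) (hC : IsCommClass P C) (hCc : IsClosedClass P C) :
    (∃ p : S × S, ℓ p.1 ≠ ℓ p.2 ∧ C = {p}) ∨
    C ⊆ SDelta S ∨
    (∀ p ∈ C, p.1 ≠ p.2 ∧ Bisimilar ℓ τ p.1 p.2) := by
  have hreach : ∀ p ∈ C, ∀ q ∈ C, Reach P p q := by
    obtain ⟨c, rfl⟩ := hC
    intro p hp q hq
    exact hp.2.trans hq.1
  by_cases h1 : ∃ p ∈ C, ℓ p.1 ≠ ℓ p.2
  · obtain ⟨p, hp, hl⟩ := h1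
    refine Or.inl ⟨p, hl, Set.eq_singleton_iff_unique_mem.mpr ⟨hp, fun q hq => ?_⟩⟩
    have := hreach p hp q hq
    induction this with
    | refl => rfl
    | @tail b c hb hbc ih =>
      have hbC : b ∈ C := by
        obtain ⟨d, rfl⟩ := hC
        exact ⟨hp.1.trans hb, (Relation.ReflTransGen.head hbc hq.2)⟩
      have hb' := ih hbC
      subst hb'
      have : c ∈ psupp (P b) := hbc
      rw [hP.2.2 b hl] at this
      exact this
  by_cases h2 : ∃ p ∈ C, p.1 = p.2
  · obtain ⟨p, hp, hd⟩ := h2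
    refine Or.inr (Or.inl fun q hq => ?_)
    have := hreach p hp q hq
    clear hq
    induction this with
    | refl => exact hd
    | @tail b c hb hbc ih =>
      obtain ⟨b1, b2⟩ := b
      have e : b1 = b2 := ih
      subst e
      exact hPc b1 hbc
  push Not at h1 h2
  refine Or.inr (Or.inr fun p hp => ⟨h2 p hp, ?_⟩)
  exact bisimilar_of_closed ℓ τ hτ C
    (fun q hq => ⟨h1 q hq, P q, hP.2.1 q (h1 q hq), hCc q hq⟩) p hp
end

section
/- Fix a labelled Markov chain ⟨S, L, τ, ℓ⟩ and states s, t ∈ S. For every policy P ∈ P_τ there exists an S²_Δ-closed policy Q ∈ P_τ such that the probability with which (s,t) reaches S²_Δ in ⟨S×S, Q⟩ equals the probability with which (s,t) reaches S²_Δ in ⟨S×S, P⟩, i.e., ρ_Q(s,t) = ρ_P(s,t). -/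
open Finset Filter
open scoped Classical

/-- Proposition 22: for every policy `P` there is an `S²_Δ`-closed policy `Q` such that
`(s,t)` reaches `S²_Δ` with the same probability under `Q` as under `P`. -/
theorem delta_closed_policy_same_reach {S L : Type*} [Fintype S] [Nonempty S] [Fintype L]
    (ℓ : S → L) (hℓ : ∃ a b : S, ℓ a ≠ ℓ b)
    (τ : S → S → ℝ) (hτ : IsTransFn τ) (s t : S)
    (P : S × S → S × S → ℝ) (hP : IsPolicy ℓ τ P)
    (ρP : S × S → ℝ) (hρP : IsLfpOn (ReachF P) ρP) :
    ∃ (Q : S × S → S × S → ℝ) (ρQ : S × S → ℝ),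
      IsPolicy ℓ τ Q ∧ DeltaClosed Q ∧ IsLfpOn (ReachF Q) ρQ ∧
      ρQ (s, t) = ρP (s, t) := by
  have hdist : ∀ a : S, IsDist (fun q : S × S => if q.1 = q.2 then τ a q.1 else 0) := by
    intro a
    refine ⟨fun q => ?_, ?_⟩
    · dsimp only
      split_ifs
      · exact (hτ a).1 _
      · exact le_rfl
    · rw [Fintype.sum_prod_type]
      simpa using (hτ a).2
  refine ⟨fun p => if p.1 = p.2 then (fun q : S × S => if q.1 = q.2 then τ p.1 q.1 else 0) else P p,
    ρP, ⟨?_, ?_, ?_⟩, ?_, ?_, rfl⟩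
  · intro p
    by_cases h : p.1 = p.2
    · simp only [if_pos h]
      exact hdist p.1
    · simp only [if_neg h]
      exact hP.1 p
  · intro p hp
    by_cases h : p.1 = p.2
    · simp only [if_pos h]
      refine ⟨hdist p.1, ?_, ?_⟩
      · intro x
        simp
      · intro x
        simp [h]
    · simp only [if_neg h]
      exact hP.2.1 p hp
  · intro p hp
    have h : p.1 ≠ p.2 := fun h => hp (congrArg ℓ h)
    simp only [if_neg h]
    exact hP.2.2 p hp
  · intro a q hq
    by_contra h
    have h' : ¬ q.1 = q.2 := h
    simp [psupp, h'] at hq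
  · convert hρP using 1
    funext e p
    by_cases h : p.1 = p.2
    · simp [ReachF, h]
    · simp [ReachF, h]
end

section
/- Fix a finite state set S, a finite label set L and a labelling ℓ : S → L taking at least two distinct values. For all states s, t ∈ S, the probabilistic bisimilarity distance function τ ↦ δ_τ(s,t) is lower semi-continuous: for every transition probability function τ : S → D(S) and every sequence (τ_n) of transition probability functions converging to τ (in the metric d_F), liminf_n δ_{τ_n}(s,t) ≥ δ_τ(s,t). -/
open Finset Filter
open scoped Classical

lemma aux_ultra (U : Ultrafilter ℕ) (g : ℕ → ℝ) (h : ∀ n, 0 ≤ g n ∧ g n ≤ 1) :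
    ∃ x, (0 ≤ x ∧ x ≤ 1) ∧ Tendsto g U (nhds x) := by
  obtain ⟨x, hx, hle⟩ := (isCompact_Icc (a := (0:ℝ)) (b := 1)).ultrafilter_le_nhds (U.map g) (by
    rw [le_principal_iff]
    change g ⁻¹' Set.Icc (0:ℝ) 1 ∈ (U : Filter ℕ)
    exact Filter.univ_mem' (fun n => h n))
  exact ⟨x, hx, hle⟩

lemma aux_coupling_exists {X : Type*} [Fintype X] (μ ν : X → ℝ) (hμ : IsDist μ) (hν : IsDist ν) :
    ∃ ω, IsCoupling ω μ ν := by
  refine ⟨fun p => μ p.1 * ν p.2, ⟨fun p => mul_nonneg (hμ.1 _) (hν.1 _), ?_⟩, ?_, ?_⟩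
  · rw [Fintype.sum_prod_type]
    simp [← Finset.mul_sum, hν.2, hμ.2]
  · intro x
    simp [← Finset.mul_sum, hν.2]
  · intro x
    simp [← Finset.sum_mul, hμ.2]

lemma aux_le_one {X : Type*} [Fintype X] (μ : X → ℝ) (hμ : IsDist μ) (x : X) : μ x ≤ 1 := by
  rw [← hμ.2]
  exact Finset.single_le_sum (fun i _ => hμ.1 i) (Finset.mem_univ x)

lemma aux_delta_le {S L : Type*} [Fintype S] (ℓ : S → L) (τ : S → S → ℝ) (d : S × S → ℝ)
    (hd : ∀ p, 0 ≤ d p) (p : S × S) (hp : ℓ p.1 = ℓ p.2) (ω : S × S → ℝ)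
    (hω : IsCoupling ω (τ p.1) (τ p.2)) : DeltaF ℓ τ d p ≤ ∑ q, ω q * d q := by
  unfold DeltaF
  rw [if_neg (by simpa using hp)]
  refine csInf_le ⟨0, ?_⟩ ⟨ω, hω, rfl⟩
  rintro r ⟨ω', h', rfl⟩
  exact Finset.sum_nonneg fun q _ => mul_nonneg (h'.1.1 q) (hd q)

lemma aux_le_delta {S L : Type*} [Fintype S] (ℓ : S → L) (τ : S → S → ℝ) (hτ : IsTransFn τ)
    (d : S × S → ℝ) (p : S × S) (hp : ℓ p.1 = ℓ p.2) (c : ℝ)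
    (h : ∀ ω, IsCoupling ω (τ p.1) (τ p.2) → c ≤ ∑ q, ω q * d q) : c ≤ DeltaF ℓ τ d p := by
  unfold DeltaF
  rw [if_neg (by simpa using hp)]
  refine le_csInf ?_ ?_
  · obtain ⟨ω, hω⟩ := aux_coupling_exists _ _ (hτ p.1) (hτ p.2)
    exact ⟨_, ω, hω, rfl⟩
  · rintro r ⟨ω', h', rfl⟩
    exact h _ h'

lemma aux_mono {S L : Type*} [Fintype S] (ℓ : S → L) (τ : S → S → ℝ) (hτ : IsTransFn τ)
    (d e : S × S → ℝ) (hd : ∀ p, 0 ≤ d p) (hde : ∀ p, d p ≤ e p) (p : S × S) :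
    DeltaF ℓ τ d p ≤ DeltaF ℓ τ e p := by
  by_cases hp : ℓ p.1 = ℓ p.2
  · refine aux_le_delta ℓ τ hτ e p hp _ fun ω hω => (aux_delta_le ℓ τ d hd p hp ω hω).trans ?_
    exact Finset.sum_le_sum fun q _ => mul_le_mul_of_nonneg_left (hde q) (hω.1.1 q)
  · simp [DeltaF, hp]

lemma aux_nonneg {S L : Type*} [Fintype S] (ℓ : S → L) (τ : S → S → ℝ) (hτ : IsTransFn τ)
    (d : S × S → ℝ) (hd : ∀ p, 0 ≤ d p) (p : S × S) :
    0 ≤ DeltaF ℓ τ d p := by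
  by_cases hp : ℓ p.1 = ℓ p.2
  · exact aux_le_delta ℓ τ hτ d p hp _ fun ω hω =>
      Finset.sum_nonneg fun q _ => mul_nonneg (hω.1.1 q) (hd q)
  · simp [DeltaF, hp]

/-- Knaster–Tarski: the least fixed point is below every pre-fixed point. -/
lemma aux_lfp_le {S L : Type*} [Fintype S] (ℓ : S → L) (τ : S → S → ℝ) (hτ : IsTransFn τ)
    (δ : S × S → ℝ) (hδ : IsLfpOn (DeltaF ℓ τ) δ) (e : S × S → ℝ) (he : Is01 e)
    (hpre : ∀ p, DeltaF ℓ τ e p ≤ e p) (p : S × S) : δ p ≤ e p := by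
  let A : Set (S × S → ℝ) := {d | Is01 d ∧ ∀ p, DeltaF ℓ τ d p ≤ d p}
  let m : S × S → ℝ := fun p => sInf ((fun d => d p) '' A)
  have hne : ∀ p, ((fun d : S × S → ℝ => d p) '' A).Nonempty := fun p => ⟨_, e, ⟨he, hpre⟩, rfl⟩
  have hm_le : ∀ d ∈ A, ∀ p, m p ≤ d p := fun d hd p =>
    csInf_le ⟨0, by rintro r ⟨d', h', rfl⟩; exact (h'.1 p).1⟩ ⟨d, hd, rfl⟩
  have hle_m : ∀ p c, (∀ d ∈ A, c ≤ d p) → c ≤ m p := fun p c h =>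
    le_csInf (hne p) (by rintro r ⟨d', h', rfl⟩; exact h d' h')
  have hm0 : ∀ p, 0 ≤ m p := fun p => hle_m p 0 fun d hd => (hd.1 p).1
  have hm01 : Is01 m := fun p => ⟨hm0 p, (hm_le e ⟨he, hpre⟩ p).trans (he p).2⟩
  have h1 : ∀ p, DeltaF ℓ τ m p ≤ m p := fun p => hle_m p _ fun d hd =>
    (aux_mono ℓ τ hτ m d hm0 (hm_le d hd) p).trans (hd.2 p)
  have h0 : ∀ p, 0 ≤ DeltaF ℓ τ m p := aux_nonneg ℓ τ hτ m hm0
  have h2 : DeltaF ℓ τ m ∈ A :=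
    ⟨fun p => ⟨h0 p, (h1 p).trans (hm01 p).2⟩, fun p => aux_mono ℓ τ hτ _ _ h0 h1 p⟩
  have hfix : DeltaF ℓ τ m = m := funext fun p => le_antisymm (h1 p) (hm_le _ h2 p)
  exact (hδ.2.2 m hm01 hfix p).trans (hm_le e ⟨he, hpre⟩ p)

lemma aux_conv {S : Type*} [Fintype S] (τ : S → S → ℝ) (τn : ℕ → S → S → ℝ)
    (hconv : Tendsto (fun n => dF (τn n) τ) atTop (nhds 0)) (a b : S) :
    Tendsto (fun n => τn n a b) atTop (nhds (τ a b)) := by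
  rw [tendsto_iff_dist_tendsto_zero]
  refine squeeze_zero (fun _ => dist_nonneg) (fun n => ?_) hconv
  rw [Real.dist_eq]
  refine (le_ciSup (f := fun x => |τn n a x - τ a x|) (Set.finite_range _).bddAbove b).trans ?_
  exact le_ciSup (f := fun a => dTV (τn n a) (τ a)) (Set.finite_range _).bddAbove a

/-- Proposition 5: the probabilistic bisimilarity distance function is lower
semi-continuous: if `τ_n → τ` then `liminf_n δ_{τ_n}(s,t) ≥ δ_τ(s,t)`. -/
theorem bisim_distance_lower_semicontinuous {S L : Type*} [Fintype S] [Nonempty S] [Fintype L]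
    (ℓ : S → L) (hℓ : ∃ a b : S, ℓ a ≠ ℓ b) (s t : S)
    (τ : S → S → ℝ) (hτ : IsTransFn τ)
    (τn : ℕ → S → S → ℝ) (hτn : ∀ n, IsTransFn (τn n))
    (hconv : Tendsto (fun n => dF (τn n) τ) atTop (nhds 0))
    (δ : S × S → ℝ) (hδ : IsLfpOn (DeltaF ℓ τ) δ)
    (δn : ℕ → S × S → ℝ) (hδn : ∀ n, IsLfpOn (DeltaF ℓ (τn n)) (δn n)) :
    δ (s, t) ≤ liminf (fun n => δn n (s, t)) atTop := by
  have hcob : IsCoboundedUnder (· ≥ ·) atTop (fun n => δn n (s, t)) :=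
    IsBoundedUnder.isCoboundedUnder_ge ⟨1, by
      simp only [eventually_map]
      exact Eventually.of_forall fun n => ((hδn n).1 _).2⟩
  refine le_of_forall_lt fun b hb => ?_
  obtain ⟨b', hbb', hb'⟩ := exists_between hb
  refine hbb'.trans_le ?_
  refine le_liminf_of_le hcob ?_
  by_contra hcon
  have hfr : ∃ᶠ n in atTop, δn n (s, t) < b' := by
    simpa [Filter.Frequently] using hcon
  have hNe : NeBot (atTop ⊓ Filter.principal {n | δn n (s, t) < b'}) := Filter.frequently_mem_iff_neBot.1 hfr
  let U : Ultrafilter ℕ := Ultrafilter.of (atTop ⊓ Filter.principal {n | δn n (s, t) < b'})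
  have hU : (U : Filter ℕ) ≤ atTop ⊓ Filter.principal {n | δn n (s, t) < b'} := Ultrafilter.of_le _
  have hU1 : (U : Filter ℕ) ≤ atTop := hU.trans inf_le_left
  have hU2 : ∀ᶠ n in (U : Filter ℕ), δn n (s, t) < b' := le_principal_iff.1 (hU.trans inf_le_right)
  choose e he01 helim using fun p => aux_ultra U (fun n => δn n p) (fun n => (hδn n).1 p)
  have hpre : ∀ p, DeltaF ℓ τ e p ≤ e p := by
    intro p
    by_cases hp : ℓ p.1 = ℓ p.2
    · have hex : ∀ n : ℕ, ∃ ω, IsCoupling ω (τn n p.1) (τn n p.2) ∧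
          ∑ q, ω q * δn n q < δn n p + 1 / ((n : ℝ) + 1) := by
        intro n
        by_contra! hno
        have h1 := aux_le_delta ℓ (τn n) (hτn n) (δn n) p hp _ hno
        rw [(hδn n).2.1] at h1
        have : (0:ℝ) < 1 / ((n : ℝ) + 1) := by positivity
        linarith
      choose ωn hωn hlt using hex
      choose ω hω01 hωlim using fun q => aux_ultra U (fun n => ωn n q)
        (fun n => ⟨(hωn n).1.1 q, aux_le_one _ (hωn n).1 q⟩)
      have hω : IsCoupling ω (τ p.1) (τ p.2) := by
        refine ⟨⟨fun q => (hω01 q).1, ?_⟩, fun x => ?_, fun x => ?_⟩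
        · refine tendsto_nhds_unique (tendsto_finsetSum _ fun q _ => hωlim q) ?_
          simp only [(hωn _).1.2]
          exact tendsto_const_nhds
        · refine tendsto_nhds_unique (tendsto_finsetSum _ fun y _ => hωlim (x, y)) ?_
          simp only [(hωn _).2.1]
          exact (aux_conv τ τn hconv _ _).mono_left hU1
        · refine tendsto_nhds_unique (tendsto_finsetSum _ fun y _ => hωlim (y, x)) ?_
          simp only [(hωn _).2.2]
          exact (aux_conv τ τn hconv _ _).mono_left hU1
      refine (aux_delta_le ℓ τ e (fun q => (he01 q).1) p hp ω hω).trans ?_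
      have hl : Tendsto (fun n => ∑ q, ωn n q * δn n q) U (nhds (∑ q, ω q * e q)) :=
        tendsto_finsetSum _ fun q _ => (hωlim q).mul (helim q)
      have hr : Tendsto (fun n : ℕ => δn n p + 1 / ((n : ℝ) + 1)) U (nhds (e p + 0)) :=
        (helim p).add (tendsto_one_div_add_atTop_nhds_zero_nat.mono_left hU1)
      rw [add_zero] at hr
      exact le_of_tendsto_of_tendsto' hl hr fun n => (hlt n).le
    · have h1 : ∀ n, δn n p = 1 := fun n => by
        rw [← (hδn n).2.1]
        simp [DeltaF, hp]
      have h2 : e p = 1 := by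
        refine tendsto_nhds_unique (helim p) ?_
        simp only [h1]
        exact tendsto_const_nhds
      rw [h2]
      simp [DeltaF, hp]
  have h3 := aux_lfp_le ℓ τ hτ δ hδ e he01 hpre (s, t)
  have h4 : e (s, t) ≤ b' := le_of_tendsto (helim (s, t)) (hU2.mono fun n hn => hn.le)
  linarith
end

section
/- Fix a labelled Markov chain ⟨S, L, τ, ℓ⟩. For all states s, t ∈ S, if s ≃ t (s and t are robustly probabilistically bisimilar), then the function σ ↦ δ_σ(s,t) is continuous at τ: for every sequence (τ_n) of transition probability functions converging to τ (in the metric d_F), lim_n δ_{τ_n}(s,t) = 0 = δ_τ(s,t). -/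
open Finset Filter
open scoped Classical

theorem lfp_le_prefixed {A : Type*} (F : (A → ℝ) → (A → ℝ))
    (h01 : ∀ d, Is01 d → Is01 (F d))
    (hmono : ∀ d e, Is01 d → Is01 e → (∀ a, d a ≤ e a) → ∀ a, F d a ≤ F e a)
    (d : A → ℝ) (hd : IsLfpOn F d) (e : A → ℝ) (he : Is01 e) (hpre : ∀ a, F e a ≤ e a) :
    ∀ a, d a ≤ e a := by
  -- the pointwise infimum of all prefixed points
  let K : Set (A → ℝ) := {f | Is01 f ∧ ∀ a, F f a ≤ f a}
  let g : A → ℝ := fun a => sInf ((fun f : A → ℝ => f a) '' K)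
  have heK : e ∈ K := ⟨he, hpre⟩
  have hbdd : ∀ a, BddBelow ((fun f : A → ℝ => f a) '' K) := by
    intro a
    refine ⟨0, ?_⟩
    rintro _ ⟨f, hf, rfl⟩
    exact (hf.1 a).1
  have hgle : ∀ f ∈ K, ∀ a, g a ≤ f a := fun f hf a => csInf_le (hbdd a) ⟨f, hf, rfl⟩
  have hle : ∀ a r, (∀ f ∈ K, r ≤ f a) → r ≤ g a := by
    intro a r h
    refine le_csInf ⟨_, e, heK, rfl⟩ ?_
    rintro _ ⟨f, hf, rfl⟩
    exact h f hf
  have hg01 : Is01 g := fun a =>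
    ⟨hle a 0 (fun f hf => (hf.1 a).1), (hgle e heK a).trans (he a).2⟩
  have hgK : g ∈ K := by
    refine ⟨hg01, fun a => hle a _ fun f hf => ?_⟩
    exact (hmono g f hg01 hf.1 (hgle f hf) a).trans (hf.2 a)
  have hFgK : F g ∈ K := ⟨h01 g hg01, hmono _ _ (h01 g hg01) hg01 hgK.2⟩
  have hfix : F g = g := funext fun a => le_antisymm (hgK.2 a) (hgle _ hFgK a)
  exact fun a => (hd.2.2 g hg01 hfix a).trans (hgle e heK a)

theorem isDist_avg01 {X : Type*} [Fintype X] {μ : X → ℝ} (hμ : IsDist μ) {d : X → ℝ}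
    (hd : Is01 d) : 0 ≤ ∑ q, μ q * d q ∧ ∑ q, μ q * d q ≤ 1 := by
  constructor
  · exact Finset.sum_nonneg fun q _ => mul_nonneg (hμ.1 q) (hd q).1
  · rw [← hμ.2]
    exact Finset.sum_le_sum fun q _ => mul_le_of_le_one_right (hμ.1 q) (hd q).2

theorem isDist_avg_mono {X : Type*} [Fintype X] {μ : X → ℝ} (hμ : IsDist μ) {d e : X → ℝ}
    (h : ∀ a, d a ≤ e a) : ∑ q, μ q * d q ≤ ∑ q, μ q * e q :=
  Finset.sum_le_sum fun q _ => mul_le_mul_of_nonneg_left (h q) (hμ.1 q)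

theorem reach_le_prefixed {S : Type*} [Fintype S] {P : S × S → S × S → ℝ}
    (hP : ∀ p, IsDist (P p)) {ρ : S × S → ℝ} (hρ : IsLfpOn (ReachF P) ρ)
    (e : S × S → ℝ) (he : Is01 e) (hpre : ∀ a, ReachF P e a ≤ e a) : ∀ a, ρ a ≤ e a := by
  refine lfp_le_prefixed (ReachF P) ?_ ?_ ρ hρ e he hpre
  · intro d hd p
    unfold ReachF
    split_ifs
    · norm_num
    · exact isDist_avg01 (hP p) hd
  · intro d e _ _ h p
    unfold ReachF
    split_ifs
    · exact le_rfl
    · exact isDist_avg_mono (hP p) h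

theorem exists_prod_coupling {S : Type*} [Fintype S] {μ ν : S → ℝ} (hμ : IsDist μ)
    (hν : IsDist ν) : ∃ ω, IsCoupling ω μ ν := by
  have h1 : ∀ x, ∑ y, μ x * ν y = μ x := fun x => by rw [← Finset.mul_sum, hν.2, mul_one]
  refine ⟨fun q => μ q.1 * ν q.2, ⟨fun q => mul_nonneg (hμ.1 _) (hν.1 _), ?_⟩, ?_, ?_⟩
  · rw [Fintype.sum_prod_type]
    simp only [h1, hμ.2]
  · intro x
    exact h1 x
  · intro x
    simp only
    rw [← Finset.sum_mul, hμ.2, one_mul]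

theorem delta_bddBelow {S : Type*} [Fintype S] (μ ν : S → ℝ) {d : S × S → ℝ} (hd : Is01 d) :
    BddBelow {r | ∃ ω, IsCoupling ω μ ν ∧ r = ∑ q, ω q * d q} := by
  refine ⟨0, ?_⟩
  rintro _ ⟨ω, hω, rfl⟩
  exact (isDist_avg01 hω.1 hd).1

theorem delta_le_prefixed {S L : Type*} [Fintype S] {ℓ : S → L} {τ : S → S → ℝ}
    (hτ : IsTransFn τ) {δ : S × S → ℝ} (hδ : IsLfpOn (DeltaF ℓ τ) δ)
    (e : S × S → ℝ) (he : Is01 e) (hpre : ∀ a, DeltaF ℓ τ e a ≤ e a) : ∀ a, δ a ≤ e a := by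
  refine lfp_le_prefixed (DeltaF ℓ τ) ?_ ?_ δ hδ e he hpre
  · intro d hd p
    unfold DeltaF
    split_ifs
    · norm_num
    · obtain ⟨ω, hω⟩ := exists_prod_coupling (hτ p.1) (hτ p.2)
      constructor
      · refine le_csInf ⟨_, ω, hω, rfl⟩ ?_
        rintro _ ⟨ω', hω', rfl⟩
        exact (isDist_avg01 hω'.1 hd).1
      · exact (csInf_le (delta_bddBelow _ _ hd) ⟨ω, hω, rfl⟩).trans (isDist_avg01 hω.1 hd).2
  · intro d e hd _ h p
    unfold DeltaF
    split_ifs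
    · exact le_rfl
    · obtain ⟨ω, hω⟩ := exists_prod_coupling (hτ p.1) (hτ p.2)
      refine le_csInf ⟨_, ω, hω, rfl⟩ ?_
      rintro _ ⟨ω', hω', rfl⟩
      exact (csInf_le (delta_bddBelow _ _ hd) ⟨ω', hω', rfl⟩).trans (isDist_avg_mono hω'.1 h)

theorem delta_le_coupling {S L : Type*} [Fintype S] {ℓ : S → L} {τ : S → S → ℝ}
    {d : S × S → ℝ} (hd : Is01 d) (p : S × S) (hp : ℓ p.1 = ℓ p.2)
    (ω : S × S → ℝ) (hω : IsCoupling ω (τ p.1) (τ p.2)) :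
    DeltaF ℓ τ d p ≤ ∑ q, ω q * d q := by
  unfold DeltaF
  rw [if_neg (not_not.2 hp)]
  exact csInf_le (delta_bddBelow _ _ hd) ⟨ω, hω, rfl⟩

theorem delta_diag {S L : Type*} [Fintype S] {ℓ : S → L} {τ : S → S → ℝ}
    (hτ : IsTransFn τ) {δ : S × S → ℝ} (hδ : IsLfpOn (DeltaF ℓ τ) δ) (u : S) :
    δ (u, u) = 0 := by
  refine le_antisymm ?_ (hδ.1 _).1
  let e : S × S → ℝ := fun p => if p.1 = p.2 then 0 else δ p
  have he : Is01 e := by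
    intro p
    simp only [e]
    split_ifs
    · norm_num
    · exact hδ.1 p
  have hle : ∀ p, e p ≤ δ p := by
    intro p
    simp only [e]
    split_ifs
    · exact (hδ.1 p).1
    · exact le_rfl
  have := delta_le_prefixed hτ hδ e he ?_ (u, u)
  · simpa [e] using this
  · rintro ⟨x, y⟩
    by_cases hxy : x = y
    · subst hxy
      have hω : IsCoupling (fun q : S × S => if q.1 = q.2 then τ x q.1 else 0) (τ x) (τ x) := by
        refine ⟨⟨fun q => ?_, ?_⟩, ?_, ?_⟩
        · simp only
          split_ifs
          · exact (hτ x).1 _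
          · exact le_rfl
        · rw [Fintype.sum_prod_type]
          simpa using (hτ x).2
        · intro z
          simp
        · intro z
          simp
      refine (delta_le_coupling he (x, x) rfl _ hω).trans (le_of_eq ?_)
      have : e (x, x) = 0 := by simp [e]
      rw [this]
      refine Finset.sum_eq_zero fun q _ => ?_
      simp only [e]
      split_ifs <;> simp
    · have h1 : e (x, y) = δ (x, y) := by simp [e, hxy]
      rw [h1]
      conv_rhs => rw [← hδ.2.1]
      unfold DeltaF
      split_ifs
      · exact le_rfl
      · obtain ⟨ω, hω⟩ := exists_prod_coupling (hτ x) (hτ y)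
        refine le_csInf ⟨_, ω, hω, rfl⟩ ?_
        rintro _ ⟨ω', hω', rfl⟩
        exact (csInf_le (delta_bddBelow _ _ he) ⟨ω', hω', rfl⟩).trans (isDist_avg_mono hω'.1 hle)

theorem exists_scale {S : Type*} {μ μ' : S → ℝ} (hμ : ∀ x, 0 ≤ μ x)
    (hμ' : ∀ x, 0 ≤ μ' x) :
    ∃ a : S → ℝ, ∀ x, 0 ≤ a x ∧ a x ≤ 1 ∧ μ x * a x = min (μ x) (μ' x) := by
  refine ⟨fun x => if μ x = 0 then 0 else min (μ x) (μ' x) / μ x, fun x => ?_⟩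
  simp only
  split_ifs with h
  · simp [h, hμ' x]
  · have : 0 < μ x := lt_of_le_of_ne (hμ x) (Ne.symm h)
    refine ⟨div_nonneg (le_min (hμ x) (hμ' x)) (hμ x), ?_, ?_⟩
    · rw [div_le_one this]
      exact min_le_left _ _
    · field_simp

theorem perturb_coupling {S : Type*} [Fintype S] {μ ν μ' ν' : S → ℝ} {ω : S × S → ℝ}
    (hω : IsCoupling ω μ ν) (hμ : IsDist μ) (hν : IsDist ν)
    (hμ' : IsDist μ') (hν' : IsDist ν') (ε : ℝ)
    (h1 : ∀ x, |μ' x - μ x| ≤ ε) (h2 : ∀ x, |ν' x - ν x| ≤ ε) :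
    ∃ ω', IsCoupling ω' μ' ν' ∧ ∀ d : S × S → ℝ, Is01 d →
      ∑ q, ω' q * d q ≤ ∑ q, ω q * d q + 2 * Fintype.card S * ε := by
  obtain ⟨a, ha⟩ := exists_scale hμ.1 hμ'.1
  obtain ⟨b, hb⟩ := exists_scale hν.1 hν'.1
  let w : S × S → ℝ := fun q => ω q * a q.1 * b q.2
  have hω0 := hω.1.1
  have hw0 : ∀ q, 0 ≤ w q := fun q =>
    mul_nonneg (mul_nonneg (hω0 q) (ha q.1).1) (hb q.2).1
  have hwω : ∀ q, w q ≤ ω q := fun q =>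
    (mul_le_of_le_one_right (mul_nonneg (hω0 q) (ha q.1).1) (hb q.2).2.1).trans
      (mul_le_of_le_one_right (hω0 q) (ha q.1).2.1)
  let α : S → ℝ := fun x => μ' x - ∑ y, w (x, y)
  let β : S → ℝ := fun y => ν' y - ∑ x, w (x, y)
  have hα : ∀ x, 0 ≤ α x := by
    intro x
    have : ∑ y, w (x, y) ≤ μ x * a x := by
      rw [← hω.2.1 x, Finset.sum_mul]
      exact Finset.sum_le_sum fun y _ => mul_le_of_le_one_right
        (mul_nonneg (hω0 _) (ha x).1) (hb y).2.1
    have h3 := min_le_right (μ x) (μ' x)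
    rw [(ha x).2.2] at this
    simp only [α]
    linarith
  have hβ : ∀ x, 0 ≤ β x := by
    intro x
    have : ∑ y, w (y, x) ≤ ν x * b x := by
      rw [← hω.2.2 x, Finset.sum_mul]
      refine Finset.sum_le_sum fun y _ => mul_le_mul_of_nonneg_right ?_ (hb x).1
      exact mul_le_of_le_one_right (hω0 _) (ha y).2.1
    have h3 := min_le_right (ν x) (ν' x)
    rw [(hb x).2.2] at this
    simp only [β]
    linarith
  let m : ℝ := 1 - ∑ q, w q
  have hαm : ∑ x, α x = m := by
    simp only [α, m, Finset.sum_sub_distrib, hμ'.2, Fintype.sum_prod_type]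
  have hβm : ∑ x, β x = m := by
    simp only [β, m, Finset.sum_sub_distrib, hν'.2, Fintype.sum_prod_type]
    rw [Finset.sum_comm]
  have hm0 : 0 ≤ m := hαm ▸ Finset.sum_nonneg fun x _ => hα x
  have hmin : ∀ (f g : S → ℝ), IsDist f → (∀ x, |g x - f x| ≤ ε) →
      1 - Fintype.card S * ε ≤ ∑ x, min (f x) (g x) := by
    intro f g hf h
    have : ∑ x, (f x - ε) ≤ ∑ x, min (f x) (g x) := by
      refine Finset.sum_le_sum fun x _ => ?_
      have := abs_le.1 (h x)
      have h0 := (abs_nonneg _).trans (h x)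
      exact le_min (by linarith) (by linarith)
    rw [Finset.sum_sub_distrib, hf.2] at this
    simpa using this
  have hm : m ≤ 2 * Fintype.card S * ε := by
    have e1 : ∑ q : S × S, ω q * a q.1 = ∑ x, min (μ x) (μ' x) := by
      rw [Fintype.sum_prod_type]
      refine Finset.sum_congr rfl fun x _ => ?_
      simp only
      rw [← Finset.sum_mul, hω.2.1, (ha x).2.2]
    have e2 : ∑ q : S × S, ω q * b q.2 = ∑ x, min (ν x) (ν' x) := by
      rw [Fintype.sum_prod_type, Finset.sum_comm]
      refine Finset.sum_congr rfl fun x _ => ?_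
      simp only
      rw [← Finset.sum_mul, hω.2.2, (hb x).2.2]
    have e3 : ∑ q : S × S, (ω q * a q.1 + ω q * b q.2 - ω q) ≤ ∑ q, w q := by
      refine Finset.sum_le_sum fun q _ => ?_
      have := mul_nonneg (hω0 q)
        (mul_nonneg (sub_nonneg.2 (ha q.1).2.1) (sub_nonneg.2 (hb q.2).2.1))
      simp only [w]
      nlinarith
    rw [Finset.sum_sub_distrib, Finset.sum_add_distrib, e1, e2, hω.1.2] at e3
    have := hmin μ μ' hμ h1
    have := hmin ν ν' hν h2
    simp only [m]
    linarith
  have hz : ∀ f : S → ℝ, (∀ x, 0 ≤ f x) → ∑ x, f x = m → ∀ x, f x * m / m = f x := by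
    intro f hf hs x
    by_cases h : m = 0
    · rw [h] at hs
      have := (Finset.sum_eq_zero_iff_of_nonneg (fun x _ => hf x)).1 hs x (Finset.mem_univ x)
      simp [this]
    · field_simp
  let r : S × S → ℝ := fun q => α q.1 * β q.2 / m
  have hr0 : ∀ q, 0 ≤ r q := fun q => div_nonneg (mul_nonneg (hα _) (hβ _)) hm0
  have hr1 : ∀ x, ∑ y, r (x, y) = α x := by
    intro x
    simp only [r]
    rw [← Finset.sum_div, ← Finset.mul_sum, hβm, hz α hα hαm]
  have hr2 : ∀ y, ∑ x, r (x, y) = β y := by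
    intro y
    simp only [r]
    rw [← Finset.sum_div, ← Finset.sum_mul, hαm, mul_comm, hz β hβ hβm]
  have hrs : ∑ q, r q = m := by
    rw [Fintype.sum_prod_type]
    simp only [hr1, hαm]
  refine ⟨fun q => w q + r q, ⟨⟨fun q => add_nonneg (hw0 q) (hr0 q), ?_⟩, ?_, ?_⟩, ?_⟩
  · rw [Finset.sum_add_distrib, hrs]
    simp [m]
  · intro x
    rw [Finset.sum_add_distrib, hr1]
    simp [α]
  · intro x
    rw [Finset.sum_add_distrib, hr2]
    simp [β]
  · intro d hd
    have : ∑ q, (w q + r q) * d q ≤ ∑ q, (ω q * d q + r q) := by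
      refine Finset.sum_le_sum fun q _ => ?_
      have := mul_le_mul_of_nonneg_right (hwω q) (hd q).1
      have := mul_le_of_le_one_right (hr0 q) (hd q).2
      linarith
    rw [Finset.sum_add_distrib, hrs] at this
    linarith

theorem abs_le_dF {S : Type*} [Fintype S] (f g : S → S → ℝ) (a b : S) :
    |f a b - g a b| ≤ dF f g := by
  have h1 : |f a b - g a b| ≤ dTV (f a) (g a) :=
    le_ciSup (f := fun x => |f a x - g a x|) (Set.finite_range _).bddAbove b
  exact h1.trans (le_ciSup (f := fun a => dTV (f a) (g a)) (Set.finite_range _).bddAbove a)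

theorem robust_tendsto {S L : Type*} [Fintype S]
    (ℓ : S → L)
    (τ : S → S → ℝ) (hτ : IsTransFn τ) (s t : S)
    (hst : Robust ℓ τ s t)
    (τn : ℕ → S → S → ℝ) (hτn : ∀ n, IsTransFn (τn n))
    (hconv : Tendsto (fun n => dF (τn n) τ) atTop (nhds 0))
    (δn : ℕ → S × S → ℝ) (hδn : ∀ n, IsLfpOn (DeltaF ℓ (τn n)) (δn n)) :
    Tendsto (fun n => δn n (s, t)) atTop (nhds 0) := by
  obtain ⟨P, ρ, hP, hρ, hρst⟩ := hst
  -- pairs with different labels never reach the diagonal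
  have hlab : ∀ p, ρ p = 1 → ℓ p.1 = ℓ p.2 := by
    intro p hp
    by_contra hne
    have := reach_le_prefixed hP.1 hρ (fun p => if ℓ p.1 = ℓ p.2 then 1 else 0) ?_ ?_ p
    · simp only [if_neg hne, hp] at this
      norm_num at this
    · intro p
      simp only
      split_ifs <;> norm_num
    · intro p
      unfold ReachF
      by_cases h1 : p.1 = p.2
      · simp [h1]
      · rw [if_neg h1]
        by_cases h2 : ℓ p.1 = ℓ p.2
        · rw [if_pos h2]
          refine (isDist_avg01 (hP.1 p) ?_).2
          intro p
          simp only
          split_ifs <;> norm_num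
        · rw [if_neg h2]
          refine le_of_eq (Finset.sum_eq_zero fun q _ => ?_)
          by_cases hq : q = p
          · simp only [hq, if_neg h2, mul_zero]
          · have h3 : q ∉ psupp (P p) := by
              rw [hP.2.2 p h2]
              exact hq
            have h4 : P p q = 0 := le_antisymm (not_lt.1 h3) ((hP.1 p).1 q)
            rw [h4, zero_mul]
  have hclosed : ∀ p, ρ p = 1 → p.1 ≠ p.2 → ∀ q, P p q ≠ 0 → ρ q = 1 := by
    intro p hp hne q hq
    have h1 : ∑ q, P p q * ρ q = 1 := by
      have := congrFun hρ.2.1 p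
      unfold ReachF at this
      rwa [if_neg hne, hp] at this
    have h2 : ∑ q, P p q * (1 - ρ q) = 0 := by
      simp only [mul_sub, mul_one, Finset.sum_sub_distrib, h1, (hP.1 p).2, sub_self]
    have h3 := (Finset.sum_eq_zero_iff_of_nonneg (fun q _ =>
      mul_nonneg ((hP.1 p).1 q) (sub_nonneg.2 (hρ.1 q).2))).1 h2 q (Finset.mem_univ q)
    rcases mul_eq_zero.1 h3 with h | h
    · exact absurd h hq
    · linarith
  have hineq : ∀ n p, ρ p = 1 →
      δn n p ≤ ∑ q, P p q * δn n q + 2 * Fintype.card S * dF (τn n) τ := by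
    intro n p hp
    obtain ⟨ω, hω, hb⟩ := perturb_coupling (hP.2.1 p (hlab p hp)) (hτ p.1) (hτ p.2)
      (hτn n p.1) (hτn n p.2) (dF (τn n) τ) (abs_le_dF _ _ _) (abs_le_dF _ _ _)
    have h1 := delta_le_coupling (hδn n).1 p (hlab p hp) ω hω
    rw [(hδn n).2.1] at h1
    exact h1.trans (hb _ (hδn n).1)
  refine tendsto_of_subseq_tendsto fun ns hns => ?_
  have hcomp : IsCompact (Set.univ.pi fun _ : S × S => Set.Icc (0 : ℝ) 1) :=
    isCompact_univ_pi fun _ => isCompact_Icc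
  obtain ⟨d, hd, φ, hφ, hlim⟩ := hcomp.tendsto_subseq (x := fun k => δn (ns k))
    (fun k p _ => (hδn (ns k)).1 p)
  refine ⟨φ, ?_⟩
  have hlimp : ∀ p, Tendsto (fun k => δn (ns (φ k)) p) atTop (nhds (d p)) :=
    fun p => (tendsto_pi_nhds.1 hlim) p
  have hd01 : Is01 d := fun p => hd p (Set.mem_univ p)
  have hdiag : ∀ u, d (u, u) = 0 := by
    intro u
    refine tendsto_nhds_unique (hlimp (u, u)) ?_
    simp only [delta_diag (hτn _) (hδn _)]
    exact tendsto_const_nhds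
  have hdle : ∀ p, ρ p = 1 → d p ≤ ∑ q, P p q * d q := by
    intro p hp
    have h1 : Tendsto (fun k => ∑ q, P p q * δn (ns (φ k)) q +
        2 * Fintype.card S * dF (τn (ns (φ k))) τ) atTop
        (nhds (∑ q, P p q * d q + 2 * Fintype.card S * 0)) := by
      refine Tendsto.add (tendsto_finsetSum _ fun q _ => (hlimp q).const_mul _) ?_
      exact (hconv.comp (hns.comp hφ.tendsto_atTop)).const_mul _
    have := le_of_tendsto_of_tendsto' (hlimp p) h1 (fun k => hineq _ p hp)
    simpa using this
  have hzero : d (s, t) = 0 := by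
    refine le_antisymm ?_ (hd01 _).1
    let e : S × S → ℝ := fun p => if ρ p = 1 then 1 - d p else 1
    have he : Is01 e := by
      intro p
      have := hd01 p
      simp only [e]
      split_ifs
      · constructor <;> linarith
      · norm_num
    have := reach_le_prefixed hP.1 hρ e he ?_ (s, t)
    · simp only [e, hρst, if_true] at this
      linarith
    · rintro ⟨x, y⟩
      unfold ReachF
      by_cases hxy : x = y
      · subst hxy
        simp [e, hdiag]
      · rw [if_neg hxy]
        by_cases hp : ρ (x, y) = 1
        · have h1 : ∑ q, P (x, y) q * e q = ∑ q, P (x, y) q * (1 - d q) := by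
            refine Finset.sum_congr rfl fun q _ => ?_
            by_cases hq : P (x, y) q = 0
            · simp [hq]
            · simp [e, hclosed _ hp hxy q hq]
          rw [h1]
          simp only [e, hp, if_true, mul_sub, mul_one, Finset.sum_sub_distrib, (hP.1 _).2]
          have := hdle _ hp
          linarith
        · simp only [e, if_neg hp]
          exact (isDist_avg01 (hP.1 _) he).2
  rw [← hzero]
  exact hlimp (s, t)

/-- Theorem 7: if `s ≃ t` (robust probabilistic bisimilarity), then the distance function
is continuous at `τ`: for every sequence `τ_n → τ`, `lim_n δ_{τ_n}(s,t) = 0 = δ_τ(s,t)`. -/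
theorem robust_implies_continuous {S L : Type*} [Fintype S] [Nonempty S] [Fintype L]
    (ℓ : S → L) (hℓ : ∃ a b : S, ℓ a ≠ ℓ b)
    (τ : S → S → ℝ) (hτ : IsTransFn τ) (s t : S)
    (hst : Robust ℓ τ s t)
    (τn : ℕ → S → S → ℝ) (hτn : ∀ n, IsTransFn (τn n))
    (hconv : Tendsto (fun n => dF (τn n) τ) atTop (nhds 0))
    (δ : S × S → ℝ) (hδ : IsLfpOn (DeltaF ℓ τ) δ)
    (δn : ℕ → S × S → ℝ) (hδn : ∀ n, IsLfpOn (DeltaF ℓ (τn n)) (δn n)) :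
    Tendsto (fun n => δn n (s, t)) atTop (nhds 0) ∧ δ (s, t) = 0 := by
  refine ⟨robust_tendsto ℓ τ hτ s t hst τn hτn hconv δn hδn, ?_⟩
  have h0 : dF τ τ = 0 := by simp [dF, dTV]
  have h := robust_tendsto ℓ τ hτ s t hst (fun _ => τ) (fun _ => hτ)
    (by simp only [h0]; exact tendsto_const_nhds) (fun _ => δ) (fun _ => hδ)
  exact tendsto_nhds_unique tendsto_const_nhds h
end

section
/- Fix a labelled Markov chain ⟨S, L, τ, ℓ⟩. For every robust bisimulation R ⊆ S×S, we have R ⊆ ≃; that is, every pair of states related by a robust bisimulation is robustly probabilistically bisimilar. -/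
open Finset Filter
open scoped Classical

/-- Pairs that can reach the diagonal in `n` steps using couplings supported in `R`. -/
def RankSet {S : Type*} [Fintype S] (τ : S → S → ℝ) (R : Set (S × S)) : ℕ → Set (S × S)
  | 0 => {p | p.1 = p.2}
  | n + 1 => {p | ∃ ω, IsCoupling ω (τ p.1) (τ p.2) ∧ psupp ω ⊆ R ∧
      ∃ q ∈ RankSet τ R n, 0 < ω q}

theorem exists_lfp_reach {S : Type*} [Fintype S] (P : S × S → S × S → ℝ)
    (hP : ∀ p, IsDist (P p)) : ∃ ρ, IsLfpOn (ReachF P) ρ := by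
  have h01 : ∀ e : S × S → ℝ, Is01 e → Is01 (ReachF P e) := by
    intro e he p
    unfold ReachF
    split_ifs
    · norm_num
    · refine ⟨Finset.sum_nonneg fun q _ => mul_nonneg ((hP p).1 q) (he q).1, ?_⟩
      rw [← (hP p).2]
      exact Finset.sum_le_sum fun q _ => mul_le_of_le_one_right ((hP p).1 q) (he q).2
  haveI : Fact ((0:ℝ) ≤ 1) := ⟨zero_le_one⟩
  let F : (S × S → Set.Icc (0:ℝ) 1) →o (S × S → Set.Icc (0:ℝ) 1) :=
    { toFun := fun e p => ⟨ReachF P (fun q => (e q : ℝ)) p,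
        h01 (fun q => (e q : ℝ)) (fun q => (e q).2) p⟩
      monotone' := by
        intro e f hef p
        show ReachF P (fun q => (e q : ℝ)) p ≤ ReachF P (fun q => (f q : ℝ)) p
        unfold ReachF
        split_ifs
        · exact le_rfl
        · exact Finset.sum_le_sum fun q _ =>
            mul_le_mul_of_nonneg_left (hef q) ((hP p).1 q) }
  refine ⟨fun p => (F.lfp p : ℝ), fun p => (F.lfp p).2, ?_, ?_⟩
  · funext p
    exact congrArg Subtype.val (congrFun F.map_lfp p)
  · intro e he hfix p
    have h : F.lfp ≤ fun q => (⟨e q, he q⟩ : Set.Icc (0:ℝ) 1) := by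
      apply F.lfp_le_fixed
      funext q
      exact Subtype.ext (congrFun hfix q)
    exact h p

theorem fixed_eq_one {S : Type*} [Fintype S] (P : S × S → S × S → ℝ)
    (hP : ∀ p, IsDist (P p)) (R : Set (S × S)) (hR : ∀ p ∈ R, psupp (P p) ⊆ R)
    (rk : S × S → ℕ)
    (hrk : ∀ p ∈ R, p.1 = p.2 ∨ ∃ q, 0 < P p q ∧ rk q < rk p)
    (e : S × S → ℝ) (he : Is01 e) (hfix : ReachF P e = e) :
    ∀ p ∈ R, e p = 1 := by
  intro p₀ hp₀
  obtain ⟨p, hp, hmin⟩ := (Set.toFinite R).exists_minimalFor e R ⟨p₀, hp₀⟩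
  have hmin' : ∀ q ∈ R, e p ≤ e q := by
    intro q hq
    by_contra h
    push Not at h
    exact absurd (hmin hq h.le) (not_le.mpr h)
  have key : ∀ n, ∀ q ∈ R, rk q = n → e q = e p → e p = 1 := by
    intro n
    induction n using Nat.strong_induction_on with
    | _ n ih =>
      intro q hq hn heq
      rcases hrk q hq with hd | ⟨r, hr, hlt⟩
      · rw [← heq, ← hfix]
        simp [ReachF, hd]
      · by_cases hd : q.1 = q.2
        · rw [← heq, ← hfix]
          simp [ReachF, hd]
        have h1 : ∑ x, P q x * e x = e p := by
          rw [← heq]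
          conv_rhs => rw [← hfix]
          simp [ReachF, hd]
        have h2 : ∑ x, P q x * (e x - e p) = 0 := by
          simp only [mul_sub, Finset.sum_sub_distrib, h1, ← Finset.sum_mul, (hP q).2]
          ring
        have h3 := (Finset.sum_eq_zero_iff_of_nonneg (by
          intro x _
          rcases ((hP q).1 x).eq_or_lt with h | h
          · rw [← h]; simp
          · exact mul_nonneg h.le (sub_nonneg.mpr (hmin' x (hR q hq h))))).1 h2 r
              (Finset.mem_univ r)
        have h4 : e r = e p := by
          rcases mul_eq_zero.1 h3 with h | h
          · exact absurd h hr.ne'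
          · linarith
        exact ih (rk r) (hn ▸ hlt) r (hR q hq hr) rfl h4
  have h1 := key _ p hp rfl rfl
  exact le_antisymm (he p₀).2 (h1 ▸ hmin' p₀ hp₀)

theorem exists_default_policy {S L : Type*} [Fintype S] (ℓ : S → L)
    (τ : S → S → ℝ) (hτ : IsTransFn τ) (p : S × S) : ∃ ω : S × S → ℝ, IsDist ω ∧
      (ℓ p.1 = ℓ p.2 → IsCoupling ω (τ p.1) (τ p.2)) ∧
      (ℓ p.1 ≠ ℓ p.2 → psupp ω = {p}) := by
  by_cases h : ℓ p.1 = ℓ p.2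
  · have hc : IsCoupling (fun q : S × S => τ p.1 q.1 * τ p.2 q.2) (τ p.1) (τ p.2) := by
      refine ⟨⟨fun q => mul_nonneg ((hτ _).1 _) ((hτ _).1 _), ?_⟩, ?_, ?_⟩
      · rw [Fintype.sum_prod_type]
        simp only [← Finset.mul_sum, (hτ _).2, mul_one]
      · intro x
        simp only [← Finset.mul_sum, (hτ _).2, mul_one]
      · intro x
        simp only [← Finset.sum_mul, (hτ _).2, one_mul]
    exact ⟨_, hc.1, fun _ => hc, fun h' => absurd h h'⟩
  · refine ⟨fun q => if q = p then 1 else 0, ⟨fun q => ?_, by simp⟩, fun h' => absurd h' h,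
      fun _ => ?_⟩
    · dsimp only
      split_ifs <;> norm_num
    · ext q
      by_cases hq : q = p <;> simp [psupp, hq]

/-- Proposition 10: every robust bisimulation is contained in robust probabilistic
bisimilarity `≃`. -/
theorem robust_bisimulation_subset_robust {S L : Type*} [Fintype S] [Nonempty S] [Fintype L]
    (ℓ : S → L) (hℓ : ∃ a b : S, ℓ a ≠ ℓ b)
    (τ : S → S → ℝ) (hτ : IsTransFn τ)
    (R : Set (S × S)) (hR : IsRobustBisim ℓ τ R) :
    R ⊆ {p : S × S | Robust ℓ τ p.1 p.2} := by
  obtain ⟨⟨-, hB⟩, hPath⟩ := hR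
  have hrank : ∀ p ∈ R, ∃ n, p ∈ RankSet τ R n := by
    intro p hp
    obtain ⟨P, hP, q, hq, hpq, -, -⟩ := hPath p hp
    clear hp
    induction hpq using Relation.ReflTransGen.head_induction_on with
    | refl => exact ⟨0, hq⟩
    | head hab _ ih =>
      obtain ⟨n, hn⟩ := ih
      exact ⟨n + 1, _, hP.2.1 _ (hB _ hab.1).1, hab.2.1, _, hn, hab.2.2⟩
  let rk : S × S → ℕ := fun p => sInf {n | p ∈ RankSet τ R n}
  have hex : ∀ p, ∃ ω : S × S → ℝ, IsDist ω ∧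
      (ℓ p.1 = ℓ p.2 → IsCoupling ω (τ p.1) (τ p.2)) ∧
      (ℓ p.1 ≠ ℓ p.2 → psupp ω = {p}) ∧
      (p ∈ R → psupp ω ⊆ R ∧ (p.1 = p.2 ∨ ∃ q, 0 < ω q ∧ rk q < rk p)) := by
    intro p
    by_cases hp : p ∈ R
    · obtain ⟨hl, ω, hω, hs⟩ := hB p hp
      have hmem : p ∈ RankSet τ R (rk p) := Nat.sInf_mem (hrank p hp)
      rcases hr : rk p with _ | n
      · rw [hr] at hmem
        exact ⟨ω, hω.1, fun _ => hω, fun h => absurd hl h, fun _ => ⟨hs, Or.inl hmem⟩⟩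
      · rw [hr] at hmem
        obtain ⟨ω', hω', hs', q, hq, hpos⟩ := hmem
        exact ⟨ω', hω'.1, fun _ => hω', fun h => absurd hl h, fun _ => ⟨hs', Or.inr
          ⟨q, hpos, Nat.lt_succ_of_le (Nat.sInf_le hq)⟩⟩⟩
    · obtain ⟨ω, h1, h2, h3⟩ := exists_default_policy ℓ τ hτ p
      exact ⟨ω, h1, h2, h3, fun h => absurd h hp⟩
  choose P h1 h2 h3 h4 using hex
  obtain ⟨ρ, hρ⟩ := exists_lfp_reach P h1
  intro p hp
  exact ⟨P, ρ, ⟨h1, h2, h3⟩, hρ, fixed_eq_one P h1 R (fun p hp => (h4 p hp).1) rk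
    (fun p hp => (h4 p hp).2) ρ hρ.1 hρ.2.1 p hp⟩
end
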